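/- arXiv:2202.01551 — 10 statements merged into one kernel-verified Lean document; each statement's English description precedes it below -/
import Mathlib

section
/- Let Ω be a nonempty finite set, P = (Ω, ≼) a partial order on Ω, and let ω : Ω → ℝ be the constant function 1. Then (P, ω) satisfies the unique decomposition property if and only if P is hierarchical. -/
/-- The ideal of the poset `Ω` generated by `B`. -/
def idl {Ω : Type*} [PartialOrder Ω] (B : Set Ω) : Set Ω := {a | ∃ b ∈ B, a ≤ b}

/-- `I` is an ideal (downward-closed subset) of the poset `Ω`. -/
def IsIdl {Ω : Type*} [PartialOrder Ω] (I : Set Ω) : Prop := ∀ a b : Ω, a ≤ b → b ∈ I → a ∈ I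

/-- `lenP y` is the largest cardinality of a chain having `y` as its greatest element. -/
noncomputable def lenP {Ω : Type*} [PartialOrder Ω] (y : Ω) : ℕ :=
  sSup {n : ℕ | ∃ c : Finset Ω, IsChain (· ≤ ·) (c : Set Ω) ∧ y ∈ c ∧ (∀ x ∈ c, x ≤ y) ∧ c.card = n}

/-- The poset `Ω` is hierarchical. -/
def Hierarchical (Ω : Type*) [PartialOrder Ω] : Prop :=
  ∀ u v : Ω, lenP u + 1 ≤ lenP v → u ≤ v

/-- `(P, ω)` satisfies the unique decomposition property. -/
def UDP {Ω : Type*} [PartialOrder Ω] (ω : Ω → ℝ) : Prop :=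
  ∀ I J : Set Ω, IsIdl I → IsIdl J → (∑ᶠ i ∈ I, ω i) = (∑ᶠ j ∈ J, ω j) →
    ∃ lam : Ω ≃o Ω, J = lam '' I ∧ ∀ i : Ω, ω (lam i) = ω i


theorem lenP_bdd {Ω : Type*} [Fintype Ω] [PartialOrder Ω] (y : Ω) :
    BddAbove {n : ℕ | ∃ c : Finset Ω, IsChain (· ≤ ·) (c : Set Ω) ∧ y ∈ c ∧ (∀ x ∈ c, x ≤ y) ∧ c.card = n} := by
  refine ⟨Fintype.card Ω, ?_⟩
  rintro n ⟨c, _, _, _, rfl⟩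
  exact Finset.card_le_univ c

theorem lenP_attained {Ω : Type*} [Fintype Ω] [PartialOrder Ω] (y : Ω) :
    ∃ c : Finset Ω, IsChain (· ≤ ·) (c : Set Ω) ∧ y ∈ c ∧ (∀ x ∈ c, x ≤ y) ∧ c.card = lenP y := by
  refine Nat.sSup_mem (s := {n : ℕ | ∃ c : Finset Ω, IsChain (· ≤ ·) (c : Set Ω) ∧ y ∈ c ∧ (∀ x ∈ c, x ≤ y) ∧ c.card = n}) ⟨1, {y}, ?_⟩ (lenP_bdd y)
  simp

theorem le_lenP {Ω : Type*} [Fintype Ω] [PartialOrder Ω] (y : Ω) (c : Finset Ω)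
    (h : IsChain (· ≤ ·) (c : Set Ω)) (hy : y ∈ c) (hc : ∀ x ∈ c, x ≤ y) : c.card ≤ lenP y :=
  le_csSup (lenP_bdd y) ⟨c, h, hy, hc, rfl⟩

theorem lenP_lt {Ω : Type*} [Fintype Ω] [PartialOrder Ω] {x y : Ω} (h : x < y) :
    lenP x < lenP y := by
  classical
  obtain ⟨c, hc, hx, hle, hcard⟩ := lenP_attained x
  have hy : y ∉ c := fun hy => absurd (hle y hy) (not_le_of_gt h)
  have := le_lenP y (insert y c) (by
    rw [Finset.coe_insert]
    exact hc.insert (fun b hb _ => Or.inr ((hle b hb).trans h.le))) (by simp) (by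
    intro z hz
    rcases Finset.mem_insert.1 hz with rfl | hz
    · exact le_rfl
    · exact (hle z hz).trans h.le)
  rw [Finset.card_insert_of_notMem hy] at this
  omega

theorem lenP_le_map {Ω : Type*} [Fintype Ω] [PartialOrder Ω] (f : Ω ≃o Ω) (x : Ω) :
    lenP x ≤ lenP (f x) := by
  classical
  obtain ⟨c, hc, hx, hle, hcard⟩ := lenP_attained x
  have := le_lenP (f x) (c.image f) (by
    intro a ha b hb hab
    simp only [Finset.coe_image, Set.mem_image, Finset.mem_coe] at ha hb
    obtain ⟨a, ha, rfl⟩ := ha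
    obtain ⟨b, hb, rfl⟩ := hb
    have := hc ha hb (fun h => hab (by rw [h]))
    simpa using this) (Finset.mem_image_of_mem f hx) (by
    intro z hz
    obtain ⟨w, hw, rfl⟩ := Finset.mem_image.1 hz
    simpa using hle w hw)
  rw [Finset.card_image_of_injective _ f.injective] at this
  omega

theorem finsum_one_ncard {Ω : Type*} [Fintype Ω] (I : Set Ω) :
    (∑ᶠ i ∈ I, (1 : ℝ)) = (I.ncard : ℝ) := by
  classical
  rw [finsum_mem_eq_finite_toFinset_sum _ (Set.toFinite I), Set.ncard_eq_toFinset_card I]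
  simp

theorem exists_swap_aux {Ω : Type*} [Fintype Ω] (A B : Set Ω) (hd : ∀ x ∈ A, x ∉ B)
    (h : A.ncard = B.ncard) : ∃ f : Ω → Ω, Function.Involutive f ∧ (∀ x ∈ A, f x ∈ B) ∧
      (∀ x ∈ B, f x ∈ A) ∧ (∀ x, x ∉ A → x ∉ B → f x = x) := by
  classical
  have e : A ≃ B := Classical.choice ((Finite.card_eq (α := A) (β := B)).1 (by rwa [Nat.card_coe_set_eq, Nat.card_coe_set_eq]))
  let f : Ω → Ω := fun x => if hx : x ∈ A then e ⟨x, hx⟩ else if hx : x ∈ B then e.symm ⟨x, hx⟩ else x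
  have hA : ∀ x (hx : x ∈ A), f x = e ⟨x, hx⟩ := fun x hx => by simp [f, hx]
  have hB : ∀ x (hx : x ∈ B), f x = e.symm ⟨x, hx⟩ := fun x hx => by
    have : x ∉ A := fun h => hd x h hx
    simp [f, hx, this]
  have hN : ∀ x, x ∉ A → x ∉ B → f x = x := fun x h1 h2 => by simp [f, h1, h2]
  refine ⟨f, fun x => ?_, fun x hx => ?_, fun x hx => ?_, hN⟩
  · by_cases h1 : x ∈ A
    · rw [hA x h1, hB _ (e ⟨x, h1⟩).2]; simp
    · by_cases h2 : x ∈ B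
      · rw [hB x h2, hA _ (e.symm ⟨x, h2⟩).2]; simp
      · rw [hN x h1 h2, hN x h1 h2]
  · rw [hA x hx]; exact (e _).2
  · rw [hB x hx]; exact (e.symm _).2

theorem stmt0 (Ω : Type*) [Fintype Ω] [Nonempty Ω] [PartialOrder Ω] :
    UDP (fun _ : Ω => (1 : ℝ)) ↔ Hierarchical Ω := by
  classical
  constructor
  · intro H u v
    induction v using WellFoundedLT.induction with
    | ind v ih =>
      intro huv
      by_contra hn
      let S : Set Ω := {x | lenP x ≤ lenP u}
      have hvS : v ∉ S := by simp only [S, Set.mem_setOf_eq]; omega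
      have huS : u ∈ S := by simp [S]
      have hle : ∀ a b : Ω, a ≤ b → lenP a ≤ lenP b := fun a b h => by
        rcases h.eq_or_lt with rfl | h
        · exact le_rfl
        · exact (lenP_lt h).le
      obtain ⟨lam, hl, -⟩ := H (insert v (S \ {u})) S (by
        intro a b hab hb
        rcases hb with rfl | ⟨hb, hbu⟩
        · rcases hab.eq_or_lt with rfl | hlt
          · exact Or.inl rfl
          · refine Or.inr ⟨?_, ?_⟩
            · by_contra hS
              simp only [S, Set.mem_setOf_eq] at hS
              exact hn ((ih a hlt (by omega)).trans hab)
            · rintro rfl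
              exact hn hab
        · refine Or.inr ⟨(hle a b hab).trans hb, ?_⟩
          rintro rfl
          rcases hab.eq_or_lt with rfl | hlt
          · exact hbu rfl
          · have := lenP_lt hlt
            simp only [S, Set.mem_setOf_eq] at hb
            omega) (fun a b hab hb => (hle a b hab).trans hb) (by
        rw [finsum_one_ncard, finsum_one_ncard, Set.ncard_insert_of_notMem (fun h => hvS h.1),
          Set.ncard_diff_singleton_add_one huS])
      have : lam v ∈ S := by rw [hl]; exact ⟨v, Or.inl rfl, rfl⟩
      have h2 := lenP_le_map lam v
      simp only [S, Set.mem_setOf_eq] at this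
      omega
  · intro H I J hI hJ hs
    rw [finsum_one_ncard, finsum_one_ncard, Nat.cast_inj] at hs
    obtain ⟨f, hf, hA, hB, hN⟩ := exists_swap_aux (I \ J) (J \ I) (fun x h h' => h.2 h'.1)
      (by
        have h1 := Set.ncard_inter_add_ncard_diff_eq_ncard I J
        have h2 := Set.ncard_inter_add_ncard_diff_eq_ncard J I
        rw [Set.inter_comm] at h2
        omega)
    have key : ∀ x ∈ I \ J, ∀ y ∈ J \ I, lenP x = lenP y := by
      intro x hx y hy
      rcases lt_trichotomy (lenP x) (lenP y) with h | h | h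
      · exact absurd (hJ _ _ (H x y h) hy.1) hx.2
      · exact h
      · exact absurd (hI _ _ (H y x h) hx.1) hy.2
    have hlen : ∀ x, lenP (f x) = lenP x := by
      intro x
      by_cases h1 : x ∈ I \ J
      · exact (key x h1 _ (hA x h1)).symm
      · by_cases h2 : x ∈ J \ I
        · exact key _ (hB x h2) x h2
        · rw [hN x h1 h2]
    have hle : ∀ x y : Ω, x ≤ y ↔ x = y ∨ lenP x < lenP y := fun x y =>
      ⟨fun h => h.eq_or_lt.imp id lenP_lt, fun h => h.elim le_of_eq (H x y)⟩
    have hIJ : ∀ x ∈ I, f x ∈ J := by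
      intro x hx
      by_cases h : x ∈ J
      · rw [hN x (fun h' => h'.2 h) (fun h' => h'.2 hx)]; exact h
      · exact (hA x ⟨hx, h⟩).1
    have hJI : ∀ x ∈ J, f x ∈ I := by
      intro x hx
      by_cases h : x ∈ I
      · rw [hN x (fun h' => h'.2 hx) (fun h' => h'.2 h)]; exact h
      · exact (hB x ⟨hx, h⟩).1
    refine ⟨⟨hf.toPerm f, ?_⟩, ?_, fun _ => rfl⟩
    · intro a b
      change f a ≤ f b ↔ a ≤ b
      rw [hle, hle, hlen, hlen, hf.injective.eq_iff]
    · ext y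
      constructor
      · intro hy
        exact ⟨f y, hJI y hy, hf y⟩
      · rintro ⟨x, hx, rfl⟩
        exact hIJ x hx
end

section
/- Let φ ∈ End_S(H) satisfy ϖ(supp(φ(α))) = ϖ(supp(α)) for all α ∈ H, and let θ ∈ H be such that there exists v ∈ Ω with ⟨supp(φ(θ))⟩_P = ⟨{v}⟩_P. Then there exists u ∈ supp(θ) with ⟨supp(θ)⟩_P = ⟨{u}⟩_P, and moreover for every γ ∈ H one has ⟨supp(γ)⟩_P ⊆ ⟨supp(θ)⟩_P if and only if ⟨supp(φ(γ))⟩_P ⊆ ⟨supp(φ(θ))⟩_P. -/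
/-- The support of an element of `∏ i, H i`. -/
def hsupp {Ω : Type*} {H : Ω → Type*} [∀ i, Zero (H i)] (β : ∀ i, H i) : Set Ω :=
  {i | β i ≠ 0}

theorem isIdl_idl {Ω : Type*} [PartialOrder Ω] (B : Set Ω) : IsIdl (idl B) :=
  fun _ _ hab ⟨c, hc, hbc⟩ => ⟨c, hc, hab.trans hbc⟩

theorem idl_sub {Ω : Type*} [PartialOrder Ω] {B I : Set Ω} (hI : IsIdl I) (h : B ⊆ I) :
    idl B ⊆ I := fun a ⟨b, hb, hab⟩ => hI a b hab (h hb)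

theorem sub_idl {Ω : Type*} [PartialOrder Ω] (B : Set Ω) : B ⊆ idl B :=
  fun b hb => ⟨b, hb, le_rfl⟩

theorem stmt1 {Ω : Type*} [Fintype Ω] [Nonempty Ω] [PartialOrder Ω]
    {S : Type*} [Ring S] {H : Ω → Type*} [∀ i, AddCommGroup (H i)] [∀ i, Module S (H i)]
    {Y : Type*} (r : Y → Y → Prop) (hr : ∀ a b : Y, r a b → r b a → a = b)
    (ϖ : Set Ω → Y)
    (h31 : ∀ B : Set Ω, ϖ B = ϖ (idl B))
    (h32 : ∀ I J : Set Ω, IsIdl I → IsIdl J → I ⊆ J → r (ϖ I) (ϖ J))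
    (h33 : ∀ I : Set Ω, IsIdl I → ∀ u ∈ I, ϖ I = ϖ {u} → I = idl {u})
    (φ : (∀ i, H i) →ₗ[S] (∀ i, H i))
    (hφ : ∀ α : ∀ i, H i, ϖ (hsupp (φ α)) = ϖ (hsupp α))
    (θ : ∀ i, H i) (v : Ω) (hv : idl (hsupp (φ θ)) = idl ({v} : Set Ω)) :
    (∃ u ∈ hsupp θ, idl (hsupp θ) = idl ({u} : Set Ω)) ∧
      ∀ γ : ∀ i, H i,
        idl (hsupp γ) ⊆ idl (hsupp θ) ↔ idl (hsupp (φ γ)) ⊆ idl (hsupp (φ θ)) := by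
  classical
  have key : ∀ A B : Set Ω, A ⊆ idl B → r (ϖ A) (ϖ B) := by
    intro A B h
    rw [h31 A, h31 B]
    exact h32 _ _ (isIdl_idl _) (isIdl_idl _) (idl_sub (isIdl_idl _) h)
  have max_mem : ∀ (A : Set Ω) (w : Ω), idl A = idl ({w} : Set Ω) → w ∈ A := by
    intro A w h
    have h1 : w ∈ idl A := h ▸ sub_idl _ rfl
    obtain ⟨b, hb, hwb⟩ := h1
    have h2 : b ∈ idl ({w} : Set Ω) := h ▸ sub_idl _ hb
    obtain ⟨c, hc, hbc⟩ := h2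
    have hc' : c = w := hc
    subst hc'
    rwa [le_antisymm hwb hbc]
  have hvm := max_mem _ _ hv
  have e1 : ϖ (hsupp θ) = ϖ {v} := by rw [← hφ, h31, hv, ← h31]
  have hex : ∃ u ∈ hsupp θ, v ∈ hsupp (φ (Pi.single u (θ u))) := by
    by_contra hcon
    push Not at hcon
    apply hvm
    have : θ = ∑ i, Pi.single i (θ i) := (Finset.univ_sum_single θ).symm
    rw [this, map_sum, Finset.sum_apply]
    refine Finset.sum_eq_zero fun i _ => ?_
    by_cases hi : θ i = 0
    · rw [hi]; simp
    · exact not_not.1 (hcon i hi)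
  obtain ⟨u, hu, huv⟩ := hex
  have e2 : hsupp (Pi.single u (θ u) : ∀ i, H i) ⊆ {u} := by
    intro i hi
    by_contra hne
    exact hi (Pi.single_eq_of_ne hne _)
  have e3 : ϖ {u} = ϖ {v} := by
    apply hr
    · rw [← e1]
      exact key _ _ (Set.singleton_subset_iff.2 (sub_idl _ hu))
    · have h1 := key {v} _ (Set.singleton_subset_iff.2 (sub_idl _ huv))
      rw [hφ] at h1
      have h2 : hsupp (Pi.single u (θ u) : ∀ i, H i) = {u} := by
        refine e2.antisymm (Set.singleton_subset_iff.2 ?_)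
        simpa [hsupp] using hu
      rwa [h2] at h1
  have hu' : idl (hsupp θ) = idl ({u} : Set Ω) := by
    apply h33 _ (isIdl_idl _) _ (sub_idl _ hu)
    rw [← h31, e1, e3]
  refine ⟨⟨u, hu, hu'⟩, fun γ => ?_⟩
  have L1 : ∀ δ : ∀ i, H i, hsupp δ ⊆ idl {u} → v ∈ hsupp (φ δ) →
      hsupp (φ δ) ⊆ idl {v} := by
    intro δ h1 h2
    rw [← h33 (idl (hsupp (φ δ))) (isIdl_idl _) v (sub_idl _ h2) ?_]
    · exact sub_idl _
    rw [← h31]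
    apply hr
    · rw [hφ, ← e3]; exact key _ _ h1
    · exact key _ _ (Set.singleton_subset_iff.2 (sub_idl _ h2))
  have L2 : ∀ δ : ∀ i, H i, hsupp (φ δ) ⊆ idl {v} → u ∈ hsupp δ →
      hsupp δ ⊆ idl {u} := by
    intro δ h1 h2
    rw [← h33 (idl (hsupp δ)) (isIdl_idl _) u (sub_idl _ h2) ?_]
    · exact sub_idl _
    rw [← h31]
    apply hr
    · rw [← hφ, e3]; exact key _ _ h1
    · exact key _ _ (Set.singleton_subset_iff.2 (sub_idl _ h2))
  have add : ∀ (I : Set Ω) (a b : ∀ i, H i), hsupp a ⊆ I → hsupp b ⊆ I →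
      hsupp (a + b) ⊆ I := by
    intro I a b ha hb i hi
    by_contra hn
    have h1 : a i = 0 := by by_contra h; exact hn (ha h)
    have h2 : b i = 0 := by by_contra h; exact hn (hb h)
    exact hi (by simp [h1, h2])
  have neg : ∀ a : ∀ i, H i, hsupp (-a) = hsupp a := by
    intro a; ext i; simp [hsupp]
  have hθ : hsupp θ ⊆ idl {u} := hu' ▸ sub_idl _
  have hφθ : hsupp (φ θ) ⊆ idl {v} := hv ▸ sub_idl _
  rw [hu', hv]
  constructor
  · intro h
    have hγ := (sub_idl _).trans h
    apply idl_sub (isIdl_idl _)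
    by_cases hv0 : φ γ v = 0
    · have := L1 (γ + θ) (add _ _ _ hγ hθ) (by
        have : φ θ v ≠ 0 := hvm
        simpa [hsupp, hv0] using this)
      have := add _ (φ (γ + θ)) (-φ θ) this (by rwa [neg])
      simpa using this
    · exact L1 γ hγ hv0
  · intro h
    have hγ := (sub_idl _).trans h
    apply idl_sub (isIdl_idl _)
    by_cases hu0 : γ u = 0
    · have := L2 (γ + θ) (by rw [map_add]; exact add _ _ _ hγ hφθ) (by
        have : θ u ≠ 0 := hu
        simpa [hsupp, hu0] using this)
      have := add _ (γ + θ) (-θ) this (by rwa [neg])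
      simpa using this
    · exact L2 γ hγ hu0
end

section
/- Assume that either H_i ≠ {0} for all i ∈ Ω or P is hierarchical. Then there exists a unique map ζ : G → T such that for every φ ∈ G one has ⟨supp(φ(α))⟩_P = ζ(φ)[⟨supp(α)⟩_P] for all α ∈ H. Moreover, ζ is a group homomorphism, ζ is surjective onto T, and the kernel of ζ equals GL_P(H), the group of S-module automorphisms of H satisfying ⟨supp(φ(α))⟩_P = ⟨supp(α)⟩_P for all α ∈ H. -/
/-- `K` is the set of indices with nonzero component module. -/
def Kset {Ω : Type*} (H : Ω → Type*) [∀ i, Zero (H i)] : Set Ω := {i | ∃ x : H i, x ≠ 0}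

/-- The subgroup `T` of order automorphisms of the poset. -/
def Tpred (S : Type*) [Ring S] {Ω : Type*} [PartialOrder Ω] (H : Ω → Type*)
    [∀ i, AddCommGroup (H i)] [∀ i, Module S (H i)] {Y : Type*} (ϖ : Set Ω → Y)
    (μ : Ω ≃o Ω) : Prop :=
  (∀ i ∉ Kset H, μ i = i) ∧ (∀ I : Set Ω, I ⊆ Kset H → ϖ (μ '' I) = ϖ I) ∧
    ∀ i : Ω, Nonempty (H i ≃ₗ[S] H (μ i))

/-- The group `G` of `S`-module automorphisms of `H` preserving `ϖ ∘ supp`. -/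
def Gpred (S : Type*) [Ring S] {Ω : Type*} (H : Ω → Type*)
    [∀ i, AddCommGroup (H i)] [∀ i, Module S (H i)] {Y : Type*} (ϖ : Set Ω → Y)
    (φ : (∀ i, H i) ≃ₗ[S] (∀ i, H i)) : Prop :=
  ∀ α : ∀ i, H i, ϖ (hsupp (φ α)) = ϖ (hsupp α)

def GLPsupp (S : Type*) [Ring S] {Ω : Type*} [PartialOrder Ω] (H : Ω → Type*)
    [∀ i, AddCommGroup (H i)] [∀ i, Module S (H i)]
    (φ : (∀ i, H i) ≃ₗ[S] (∀ i, H i)) : Prop :=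
  ∀ α : ∀ i, H i, idl (hsupp (φ α)) = idl (hsupp α)

theorem idl_eq_of_top {Ω : Type*} [PartialOrder Ω] {B : Set Ω} {u : Ω} (h : u ∈ B)
    (h' : ∀ b ∈ B, b ≤ u) : idl B = idl {u} := by
  ext x; constructor
  · rintro ⟨b, hb, hx⟩; exact ⟨u, rfl, hx.trans (h' b hb)⟩
  · rintro ⟨b, rfl, hx⟩; exact ⟨_, h, hx⟩

theorem top_of_idl_eq {Ω : Type*} [PartialOrder Ω] {B : Set Ω} {u : Ω} (h : idl B = idl {u}) :
    u ∈ B ∧ ∀ b ∈ B, b ≤ u := by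
  have h2 : ∀ b ∈ B, b ≤ u := by
    intro b hb
    have : b ∈ idl ({u} : Set Ω) := h ▸ ⟨b, hb, le_rfl⟩
    obtain ⟨c, rfl, hc⟩ := this; exact hc
  have : u ∈ idl B := h ▸ ⟨u, rfl, le_rfl⟩
  obtain ⟨c, hc, hc'⟩ := this
  exact ⟨le_antisymm hc' (h2 c hc) ▸ hc, h2⟩

structure Good {Ω : Type*} [PartialOrder Ω] {Y : Type*} (ϖ : Set Ω → Y) : Prop where
  A : ∀ (B : Set Ω) (u b : Ω), b ∈ B → u ≤ b → ϖ B = ϖ {u} → u ∈ B ∧ ∀ b ∈ B, b ≤ u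
  B : ∀ (B C : Set Ω) (i j : Ω), i ∈ C → j ∈ B → ϖ B = ϖ {i} → ϖ C = ϖ {j} → ϖ {i} = ϖ {j}
  D : ∀ (B : Set Ω) (u : Ω), u ∈ B → (∀ b ∈ B, b ≤ u) → ϖ B = ϖ {u}
  E : ∀ B : Set Ω, ϖ B = ϖ (idl B)

theorem mkGood {Ω : Type*} [PartialOrder Ω]
    {Y : Type*} (r : Y → Y → Prop) (hr : ∀ a b : Y, r a b → r b a → a = b)
    (ϖ : Set Ω → Y)
    (h31 : ∀ B : Set Ω, ϖ B = ϖ (idl B))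
    (h32 : ∀ I J : Set Ω, IsIdl I → IsIdl J → I ⊆ J → r (ϖ I) (ϖ J))
    (h33 : ∀ I : Set Ω, IsIdl I → ∀ u ∈ I, ϖ I = ϖ {u} → I = idl {u}) : Good ϖ where
  A B u b hb hu h := top_of_idl_eq (h33 (idl B) (isIdl_idl B) u ⟨b, hb, hu⟩ (by rw [← h31, h]))
  B B C i j hi hj h h' := by
    have key : ∀ (B : Set Ω) (i : Ω), i ∈ B → r (ϖ {i}) (ϖ B) := by
      intro B i hi
      rw [h31 B, h31 {i}]
      apply h32 _ _ (isIdl_idl _) (isIdl_idl _)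
      rintro x ⟨_, rfl, hx⟩; exact ⟨_, hi, hx⟩
    apply hr
    · rw [← h']; exact key _ _ hi
    · rw [← h]; exact key _ _ hj
  D B u hu h := by rw [h31 B, idl_eq_of_top hu h, ← h31]
  E := h31

section
variable {Ω : Type*} [Fintype Ω] [PartialOrder Ω]
    {S : Type*} [Ring S] {H : Ω → Type*} [∀ i, AddCommGroup (H i)] [∀ i, Module S (H i)]
    {Y : Type*} {ϖ : Set Ω → Y}

open Classical in
theorem hsupp_single {i : Ω} {a : H i} (ha : a ≠ 0) : hsupp (Pi.single i a) = {i} := by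
  ext k
  simp only [hsupp, Set.mem_setOf_eq, Set.mem_singleton_iff]
  constructor
  · intro h; by_contra hk; exact h (Pi.single_eq_of_ne hk a)
  · rintro rfl; simpa using ha

theorem Gsymm {φ : (∀ i, H i) ≃ₗ[S] (∀ i, H i)} (h : Gpred S H ϖ φ) : Gpred S H ϖ φ.symm := by
  intro α; have := h (φ.symm α); simpa using this.symm

open Classical in
theorem map_eq_sum (φ : (∀ i, H i) ≃ₗ[S] (∀ i, H i)) (α : ∀ i, H i) (k : Ω) :
    φ α k = ∑ i, φ (Pi.single i (α i)) k := by
  conv_lhs => rw [← Finset.univ_sum_single α]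
  rw [map_sum, Finset.sum_apply]

open Classical in
theorem exists_of_map_ne {φ : (∀ i, H i) ≃ₗ[S] (∀ i, H i)} {α : ∀ i, H i} {k : Ω}
    (h : φ α k ≠ 0) : ∃ i, α i ≠ 0 ∧ φ (Pi.single i (α i)) k ≠ 0 := by
  rw [map_eq_sum] at h
  obtain ⟨i, -, hi⟩ := Finset.exists_ne_zero_of_sum_ne_zero h
  refine ⟨i, fun h0 => hi ?_, hi⟩
  simp [h0]

open Classical in
/-- `j` is the top of the support of the image of all nonzero elements of `H i`. -/
def RR (φ : (∀ i, H i) ≃ₗ[S] (∀ i, H i)) (i j : Ω) : Prop :=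
  ∀ a : H i, a ≠ 0 → φ (Pi.single i a) j ≠ 0 ∧ ∀ k, φ (Pi.single i a) k ≠ 0 → k ≤ j

open Classical in
theorem key1 (g : Good ϖ) {φ : (∀ i, H i) ≃ₗ[S] (∀ i, H i)} (hφ : Gpred S H ϖ φ) {i : Ω}
    {a : H i} (ha : a ≠ 0) : ∃ j, ϖ {j} = ϖ {i} ∧ φ (Pi.single i a) j ≠ 0 ∧
      (∀ k, φ (Pi.single i a) k ≠ 0 → k ≤ j) ∧
      φ.symm (Pi.single j (φ (Pi.single i a) j)) i ≠ 0 ∧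
      (∀ k, φ.symm (Pi.single j (φ (Pi.single i a) j)) k ≠ 0 → k ≤ i) := by
  have h0 : φ.symm (φ (Pi.single i a)) i ≠ 0 := by simpa using ha
  obtain ⟨j, hj, hj'⟩ := exists_of_map_ne h0
  have e1 : ϖ (hsupp (φ (Pi.single i a))) = ϖ {i} := by rw [hφ, hsupp_single ha]
  have e2 : ϖ (hsupp (φ.symm (Pi.single j (φ (Pi.single i a) j)))) = ϖ {j} := by
    rw [Gsymm hφ, hsupp_single hj]
  have e3 := g.B _ _ i j hj' hj e1 e2
  refine ⟨j, e3.symm, hj, (g.A _ j j hj le_rfl (e1.trans e3)).2, hj',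
    (g.A _ i i hj' le_rfl (e2.trans e3.symm)).2⟩

theorem eq_of_le (g : Good ϖ) {i j : Ω} (h : i ≤ j) (h' : ϖ {i} = ϖ {j}) : i = j :=
  (g.A {j} i j rfl h h'.symm).1

open Classical in
theorem key2 (g : Good ϖ) {φ : (∀ i, H i) ≃ₗ[S] (∀ i, H i)} (hφ : Gpred S H ϖ φ) {i : Ω}
    (hi : i ∈ Kset H) : ∃ j, ϖ {j} = ϖ {i} ∧ j ∈ Kset H ∧ RR φ i j := by
  obtain ⟨a, ha⟩ := hi
  obtain ⟨j, e, h1, h2, -, -⟩ := key1 g hφ ha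
  refine ⟨j, e, ⟨_, h1⟩, ?_⟩
  intro b hb
  obtain ⟨j', e', h1', h2', -, -⟩ := key1 g hφ hb
  suffices j' = j by subst this; exact ⟨h1', h2'⟩
  by_contra hne
  have z1 : φ (Pi.single i a) j' = 0 := by
    by_contra hh; exact hne (eq_of_le g (h2 _ hh) (e'.trans e.symm))
  have z2 : φ (Pi.single i b) j = 0 := by
    by_contra hh; exact hne (eq_of_le g (h2' _ hh) (e.trans e'.symm)).symm
  have hab : a + b ≠ 0 := by
    intro hab
    have : b = -a := (neg_eq_of_add_eq_zero_right hab).symm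
    subst this
    rw [Pi.single_neg, map_neg, Pi.neg_apply, z1, neg_zero] at h1'
    exact h1' rfl
  obtain ⟨k, ek, -, hk, -, -⟩ := key1 g hφ hab
  have l1 : j ≤ k := hk j (by rw [Pi.single_add, map_add, Pi.add_apply, z2, add_zero]; exact h1)
  have l2 : j' ≤ k := hk j' (by rw [Pi.single_add, map_add, Pi.add_apply, z1, zero_add]; exact h1')
  exact hne ((eq_of_le g l2 (e'.trans ek.symm)).trans (eq_of_le g l1 (e.trans ek.symm)).symm)

theorem RR_unique {φ : (∀ i, H i) ≃ₗ[S] (∀ i, H i)} {i j j' : Ω} (hi : i ∈ Kset H)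
    (h : RR φ i j) (h' : RR φ i j') : j = j' := by
  obtain ⟨a, ha⟩ := hi
  exact le_antisymm ((h' a ha).2 _ (h a ha).1) ((h a ha).2 _ (h' a ha).1)

open Classical in
theorem RR_symm (g : Good ϖ) {φ : (∀ i, H i) ≃ₗ[S] (∀ i, H i)} (hφ : Gpred S H ϖ φ) {i j : Ω}
    (hi : i ∈ Kset H) (h : RR φ i j) : RR φ.symm j i := by
  obtain ⟨a, ha⟩ := hi
  obtain ⟨j', e, h1, h2, h3, h4⟩ := key1 g hφ ha
  obtain rfl : j = j' := le_antisymm (h2 _ (h a ha).1) ((h a ha).2 _ h1)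
  obtain ⟨i', e', -, hr⟩ := key2 g (Gsymm hφ) ⟨_, h1⟩
  obtain rfl : i = i' := le_antisymm ((hr _ h1).2 _ h3) (h4 _ (hr _ h1).1)
  exact hr

open Classical in
theorem RR_mono (g : Good ϖ) {φ : (∀ i, H i) ≃ₗ[S] (∀ i, H i)} (hφ : Gpred S H ϖ φ)
    {i j i' j' : Ω} (hi : i ∈ Kset H) (hi' : i' ∈ Kset H) (h : RR φ i j) (h' : RR φ i' j')
    (hl : i ≤ i') : j ≤ j' := by
  rcases hl.eq_or_lt with rfl | hlt
  · exact (RR_unique hi h h').le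
  have ej' : ϖ {j'} = ϖ {i'} := by
    obtain ⟨k, ek, -, hk⟩ := key2 g hφ hi'
    rw [RR_unique hi' h' hk, ek]
  obtain ⟨a, ha⟩ := hi
  obtain ⟨b, hb⟩ := hi'
  by_contra hn
  have z : φ (Pi.single i' b) j = 0 := by
    by_contra hh; exact hn ((h' b hb).2 _ hh)
  have m1 : φ (Pi.single i a + Pi.single i' b) j ≠ 0 := by
    rw [map_add, Pi.add_apply, z, add_zero]; exact (h a ha).1
  have e1 : ϖ (hsupp (φ (Pi.single i a + Pi.single i' b))) = ϖ {j'} := by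
    rw [hφ, ej']
    apply g.D
    · show _ ≠ _
      rw [Pi.add_apply, Pi.single_eq_of_ne hlt.ne', zero_add, Pi.single_eq_same]; exact hb
    · intro k hk
      by_contra hkn
      apply hk
      rw [Pi.add_apply, Pi.single_eq_of_ne (by rintro rfl; exact hkn hl),
        Pi.single_eq_of_ne (by rintro rfl; exact hkn le_rfl), zero_add]
  by_cases hz : φ (Pi.single i a) j' = 0
  · refine hn ((g.A _ j' j' ?_ le_rfl e1).2 j m1)
    show _ ≠ _
    rw [map_add, Pi.add_apply, hz, zero_add]; exact (h' b hb).1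
  · exact hn ((g.A _ j' j m1 ((h a ha).2 _ hz) e1).2 j m1)

theorem exists_fun (g : Good ϖ) {φ : (∀ i, H i) ≃ₗ[S] (∀ i, H i)} (hφ : Gpred S H ϖ φ) :
    ∃ m : Ω → Ω, (∀ i ∉ Kset H, m i = i) ∧ ∀ i ∈ Kset H, m i ∈ Kset H ∧ RR φ i (m i) := by
  classical
  have : ∀ i, ∃ j, (i ∉ Kset H → j = i) ∧ (i ∈ Kset H → j ∈ Kset H ∧ RR φ i j) := by
    intro i
    by_cases hi : i ∈ Kset H
    · obtain ⟨j, -, h⟩ := key2 g hφ hi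
      exact ⟨j, fun h => absurd hi h, fun _ => h⟩
    · exact ⟨i, fun _ => rfl, fun h => absurd h hi⟩
  choose m h1 h2 using this
  exact ⟨m, h1, h2⟩

theorem lenP_lt_s3 {u v : Ω} (h : u < v) : lenP u < lenP v := by
  classical
  have bdd : ∀ y : Ω, BddAbove {n : ℕ | ∃ c : Finset Ω, IsChain (· ≤ ·) (c : Set Ω) ∧ y ∈ c ∧
      (∀ x ∈ c, x ≤ y) ∧ c.card = n} := by
    intro y; refine ⟨Fintype.card Ω, ?_⟩
    rintro n ⟨c, -, -, -, rfl⟩; exact Finset.card_le_univ c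
  have ne : ({n : ℕ | ∃ c : Finset Ω, IsChain (· ≤ ·) (c : Set Ω) ∧ u ∈ c ∧
      (∀ x ∈ c, x ≤ u) ∧ c.card = n}).Nonempty := ⟨1, {u}, by simp⟩
  obtain ⟨c, hc, huc, hle, hcard⟩ := Nat.sSup_mem ne (bdd u)
  have : lenP u + 1 ≤ lenP v := by
    apply le_csSup (bdd v)
    refine ⟨insert v c, ?_, by simp, ?_, ?_⟩
    · rw [Finset.coe_insert]
      apply hc.insert
      intro b hb _; right; exact (hle b hb).trans h.le
    · intro x hx
      rcases Finset.mem_insert.1 hx with rfl | hx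
      · exact le_rfl
      · exact (hle x hx).trans h.le
    · rw [Finset.card_insert_of_notMem, hcard]; · rfl
      intro hv; exact absurd h (hle v hv).not_gt
  omega

/-- extension of an order automorphism of a subset of a hierarchical poset -/
theorem hier_len (hh : Hierarchical Ω) {K : Set Ω} {m m' : Ω → Ω}
    (hmK : ∀ i ∈ K, m i ∈ K) (hmK' : ∀ i ∈ K, m' i ∈ K) (hl : ∀ i ∈ K, m' (m i) = i)
    (hr : ∀ i ∈ K, m (m' i) = i) (hm : ∀ i ∈ K, ∀ j ∈ K, i ≤ j → m i ≤ m j)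
    (hm' : ∀ i ∈ K, ∀ j ∈ K, i ≤ j → m' i ≤ m' j) {i : Ω} (hi : i ∈ K) : lenP (m i) = lenP i := by
  classical
  have hlt : ∀ u v : Ω, lenP u < lenP v → u < v := fun u v h =>
    lt_of_le_of_ne (hh u v h) (by rintro rfl; exact lt_irrefl _ h)
  let F : Ω → Finset Ω := fun i => Finset.univ.filter fun x => x ∈ K ∧ x < i
  have hF : ∀ x y, x ∈ F y ↔ x ∈ K ∧ x < y := by intro x y; simp [F]
  have c : (F i).card = (F (m i)).card := by
    apply Finset.card_bij' (fun x _ => m x) (fun x _ => m' x)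
    · intro x hx
      rw [hF] at hx ⊢
      refine ⟨hmK x hx.1, lt_of_le_of_ne (hm x hx.1 i hi hx.2.le) fun h => hx.2.ne ?_⟩
      rw [← hl x hx.1, h, hl i hi]
    · intro x hx
      rw [hF] at hx ⊢
      have := hm' x hx.1 _ (hmK i hi) hx.2.le
      rw [hl i hi] at this
      refine ⟨hmK' x hx.1, lt_of_le_of_ne this fun h => hx.2.ne ?_⟩
      rw [← hr x hx.1, h]
    · intro x hx; exact hl x ((hF _ _).1 hx).1
    · intro x hx; exact hr x ((hF _ _).1 hx).1
  have aux : ∀ u ∈ K, ∀ v, lenP u < lenP v → (F u).card < (F v).card := by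
    intro u hu v h
    apply Finset.card_lt_card
    rw [Finset.ssubset_iff_of_subset]
    · exact ⟨u, (hF _ _).2 ⟨hu, hlt _ _ h⟩, fun h => lt_irrefl _ ((hF _ _).1 h).2⟩
    · intro x hx
      rw [hF] at hx ⊢
      exact ⟨hx.1, hx.2.trans (hlt _ _ h)⟩
  rcases lt_trichotomy (lenP (m i)) (lenP i) with h | h | h
  · have := aux _ (hmK i hi) _ h; omega
  · exact h
  · have := aux _ hi _ h; omega

theorem mono_all {K : Set Ω} (hassum : (∀ i : Ω, i ∈ K) ∨ Hierarchical Ω) {m m' : Ω → Ω}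
    (hid : ∀ i ∉ K, m i = i)
    (hmK : ∀ i ∈ K, m i ∈ K) (hmK' : ∀ i ∈ K, m' i ∈ K) (hl : ∀ i ∈ K, m' (m i) = i)
    (hr : ∀ i ∈ K, m (m' i) = i) (hm : ∀ i ∈ K, ∀ j ∈ K, i ≤ j → m i ≤ m j)
    (hm' : ∀ i ∈ K, ∀ j ∈ K, i ≤ j → m' i ≤ m' j) (i j : Ω) (hij : i ≤ j) : m i ≤ m j := by
  rcases hassum with hK | hh
  · exact hm i (hK i) j (hK j) hij
  have hlen : ∀ i, lenP (m i) = lenP i := by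
    intro i
    by_cases hi : i ∈ K
    · exact hier_len hh hmK hmK' hl hr hm hm' hi
    · rw [hid i hi]
  rcases hij.eq_or_lt with rfl | h
  · exact le_rfl
  · apply hh; rw [hlen, hlen]; exact lenP_lt_s3 h

theorem main_ex (g : Good ϖ) (hassum : (∀ i : Ω, i ∈ Kset H) ∨ Hierarchical Ω)
    {φ : (∀ i, H i) ≃ₗ[S] (∀ i, H i)} (hφ : Gpred S H ϖ φ) :
    ∃ μ : Ω ≃o Ω, (∀ i ∉ Kset H, μ i = i) ∧ ∀ i ∈ Kset H, RR φ i (μ i) := by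
  obtain ⟨m, hid, hm⟩ := exists_fun g hφ
  obtain ⟨m', hid', hm'⟩ := exists_fun g (Gsymm hφ)
  have hl : ∀ i ∈ Kset H, m' (m i) = i := fun i hi =>
    RR_unique (hm i hi).1 (hm' _ (hm i hi).1).2 (RR_symm g hφ hi (hm i hi).2)
  have hr : ∀ i ∈ Kset H, m (m' i) = i := fun i hi =>
    RR_unique (hm' i hi).1 (hm _ (hm' i hi).1).2 (RR_symm g (Gsymm hφ) hi (hm' i hi).2)
  have mo : ∀ i ∈ Kset H, ∀ j ∈ Kset H, i ≤ j → m i ≤ m j := fun i hi j hj hij =>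
    RR_mono g hφ hi hj (hm i hi).2 (hm j hj).2 hij
  have mo' : ∀ i ∈ Kset H, ∀ j ∈ Kset H, i ≤ j → m' i ≤ m' j := fun i hi j hj hij =>
    RR_mono g (Gsymm hφ) hi hj (hm' i hi).2 (hm' j hj).2 hij
  have M := mono_all hassum hid (fun i hi => (hm i hi).1) (fun i hi => (hm' i hi).1) hl hr mo mo'
  have M' := mono_all hassum hid' (fun i hi => (hm' i hi).1) (fun i hi => (hm i hi).1) hr hl mo' mo
  have L : ∀ i, m' (m i) = i := fun i => by
    by_cases hi : i ∈ Kset H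
    · exact hl i hi
    · rw [hid i hi, hid' i hi]
  have R : ∀ i, m (m' i) = i := fun i => by
    by_cases hi : i ∈ Kset H
    · exact hr i hi
    · rw [hid' i hi, hid i hi]
  refine ⟨⟨⟨m, m', L, R⟩, ?_⟩, hid, fun i hi => (hm i hi).2⟩
  intro a b
  constructor
  · intro h; have := M' _ _ h; simpa [L] using this
  · intro h; exact M _ _ h

theorem idl_image (μ : Ω ≃o Ω) (B : Set Ω) : idl (μ '' B) = μ '' idl B := by
  ext x; constructor
  · rintro ⟨_, ⟨b, hb, rfl⟩, hx⟩
    exact ⟨μ.symm x, ⟨b, hb, by rwa [μ.symm_apply_le]⟩, by simp⟩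
  · rintro ⟨y, ⟨b, hb, hy⟩, rfl⟩
    exact ⟨μ b, ⟨b, hb, rfl⟩, μ.monotone hy⟩

theorem main_idl {φ : (∀ i, H i) ≃ₗ[S] (∀ i, H i)} {μ : Ω ≃o Ω}
    (hR : ∀ i ∈ Kset H, RR φ i (μ i)) (α : ∀ i, H i) :
    idl (hsupp (φ α)) = μ '' idl (hsupp α) := by
  classical
  rw [← idl_image]
  ext x; constructor
  · rintro ⟨k, hk, hx⟩
    obtain ⟨i, hi, hi'⟩ := exists_of_map_ne hk
    have := (hR i ⟨_, hi⟩ _ hi).2 k (by convert hi')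
    exact ⟨μ i, ⟨i, hi, rfl⟩, hx.trans this⟩
  · rintro ⟨_, ⟨i, hi, rfl⟩, hx⟩
    obtain ⟨t, hit, ht⟩ := (Set.toFinite (hsupp α)).exists_le_maximal hi
    refine ⟨μ t, ?_, hx.trans (μ.monotone hit)⟩
    show _ ≠ _
    rw [map_eq_sum, Finset.sum_eq_single t]
    · convert (hR t ⟨_, ht.1⟩ _ ht.1).1
    · intro b _ hbt
      by_cases hb : α b = 0
      · simp [hb]
      by_contra hne
      have := (hR b ⟨_, hb⟩ _ hb).2 (μ t) (by convert hne)
      have htb := μ.le_iff_le.1 this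
      exact hbt (le_antisymm (ht.2 hb htb) htb)
    · intro h; exact absurd (Finset.mem_univ _) h

theorem main_iso {φ : (∀ i, H i) ≃ₗ[S] (∀ i, H i)} {μ : Ω ≃o Ω}
    (hid : ∀ i ∉ Kset H, μ i = i)
    (hR : ∀ i ∈ Kset H, RR φ i (μ i)) (i : Ω) : Nonempty (H i ≃ₗ[S] H (μ i)) := by
  classical
  by_cases hi : i ∈ Kset H
  swap
  · rw [hid i hi]; exact ⟨LinearEquiv.refl _ _⟩
  let f : H i →ₗ[S] H (μ i) := LinearMap.proj (μ i) ∘ₗ φ.toLinearMap ∘ₗ LinearMap.single S H i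
  have hf : ∀ a, f a = φ (Pi.single i a) (μ i) := fun a => rfl
  refine ⟨LinearEquiv.ofBijective f ⟨?_, ?_⟩⟩
  · rw [injective_iff_map_eq_zero]
    intro a ha
    by_contra h
    apply (hR i hi a h).1
    rw [hf] at ha; convert ha
  · intro b
    by_cases hb : b = 0
    · exact ⟨0, by rw [map_zero, hb]⟩
    let γ := φ.symm (Pi.single (μ i) b)
    have hγ : φ γ = Pi.single (μ i) b := by simp [γ]
    refine ⟨γ i, ?_⟩
    have e := main_idl hR γ
    rw [hγ, show hsupp (Pi.single (μ i) b) = {μ i} by convert hsupp_single hb] at e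
    have sup : ∀ k, γ k ≠ 0 → k ≤ i := by
      intro k hk
      have : μ k ∈ idl ({μ i} : Set Ω) := e ▸ ⟨k, ⟨k, hk, le_rfl⟩, rfl⟩
      obtain ⟨_, rfl, h⟩ := this
      exact μ.le_iff_le.1 h
    have := map_eq_sum φ γ (μ i)
    rw [hγ, Pi.single_eq_same, Finset.sum_eq_single i] at this
    · rw [hf, this]
    · intro k _ hki
      by_cases hk : γ k = 0
      · simp [hk]
      by_contra hne
      have := (hR k ⟨_, hk⟩ _ hk).2 _ hne
      exact hki (le_antisymm (sup k hk) (μ.le_iff_le.1 this))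
    · intro h; exact absurd (Finset.mem_univ _) h

theorem exists_supp {I : Set Ω} (hI : I ⊆ Kset H) : ∃ α : ∀ i, H i, hsupp α = I := by
  classical
  have : ∀ i, ∃ x : H i, x ≠ 0 ↔ i ∈ I := by
    intro i
    by_cases h : i ∈ I
    · obtain ⟨x, hx⟩ := hI h; exact ⟨x, by simp [hx, h]⟩
    · exact ⟨0, by simp [h]⟩
  choose α hα using this
  exact ⟨α, Set.ext hα⟩

theorem main_T (g : Good ϖ) (hassum : (∀ i : Ω, i ∈ Kset H) ∨ Hierarchical Ω)
    {φ : (∀ i, H i) ≃ₗ[S] (∀ i, H i)} (hφ : Gpred S H ϖ φ) :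
    ∃ μ : {μ : Ω ≃o Ω // Tpred S H ϖ μ}, ∀ α, idl (hsupp (φ α)) = μ.1 '' idl (hsupp α) := by
  obtain ⟨μ, hid, hR⟩ := main_ex g hassum hφ
  refine ⟨⟨μ, hid, ?_, main_iso hid hR⟩, main_idl hR⟩
  intro I hI
  obtain ⟨α, rfl⟩ := exists_supp (H := H) hI
  rw [g.E, idl_image, ← main_idl hR, ← g.E, hφ]

theorem uniq {μ ν : Ω ≃o Ω} (hμ : ∀ i ∉ Kset H, μ i = i) (hν : ∀ i ∉ Kset H, ν i = i)
    (h : ∀ α : ∀ i, H i, μ '' idl (hsupp α) = ν '' idl (hsupp α)) (i : Ω) : μ i = ν i := by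
  by_cases hi : i ∈ Kset H
  · obtain ⟨α, hα⟩ := exists_supp (H := H) (Set.singleton_subset_iff.2 hi)
    have := h α
    rw [hα, ← idl_image, ← idl_image, Set.image_singleton, Set.image_singleton] at this
    exact (top_of_idl_eq this.symm).1
  · rw [hμ i hi, hν i hi]

theorem surj (g : Good ϖ) {μ : Ω ≃o Ω} (hμ : Tpred S H ϖ μ) :
    ∃ φ : (∀ i, H i) ≃ₗ[S] (∀ i, H i), Gpred S H ϖ φ ∧
      ∀ α, idl (hsupp (φ α)) = μ '' idl (hsupp α) := by
  have e := fun i => (hμ.2.2 i).some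
  let φ : (∀ i, H i) ≃ₗ[S] (∀ i, H i) :=
    (LinearEquiv.piCongrRight e).trans (LinearEquiv.piCongrLeft S H μ.toEquiv)
  have hφ : ∀ α i, φ α (μ i) = e i (α i) := by
    intro α i
    exact Equiv.piCongrLeft_apply_apply H μ.toEquiv (fun i => e i (α i)) i
  have hs : ∀ α, hsupp (φ α) = μ '' hsupp α := by
    intro α; ext x
    obtain ⟨i, rfl⟩ := μ.surjective x
    rw [μ.injective.mem_set_image]
    simp [hsupp, hφ]
  refine ⟨φ, fun α => ?_, fun α => ?_⟩
  · rw [hs]; exact hμ.2.1 _ fun i hi => ⟨_, hi⟩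
  · rw [hs, idl_image]

end

theorem stmt3 {Ω : Type*} [Fintype Ω] [Nonempty Ω] [PartialOrder Ω]
    {S : Type*} [Ring S] {H : Ω → Type*} [∀ i, AddCommGroup (H i)] [∀ i, Module S (H i)]
    {Y : Type*} (r : Y → Y → Prop) (hr : ∀ a b : Y, r a b → r b a → a = b)
    (ϖ : Set Ω → Y)
    (h31 : ∀ B : Set Ω, ϖ B = ϖ (idl B))
    (h32 : ∀ I J : Set Ω, IsIdl I → IsIdl J → I ⊆ J → r (ϖ I) (ϖ J))
    (h33 : ∀ I : Set Ω, IsIdl I → ∀ u ∈ I, ϖ I = ϖ {u} → I = idl {u})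
    (hassum : (∀ i : Ω, ∃ x : H i, x ≠ 0) ∨ Hierarchical Ω) :
    ∃ ζ : {φ : (∀ i, H i) ≃ₗ[S] (∀ i, H i) // Gpred S H ϖ φ} → {μ : Ω ≃o Ω // Tpred S H ϖ μ},
      -- defining property of ζ
      (∀ φ, ∀ α : ∀ i, H i, idl (hsupp (φ.1 α)) = (ζ φ).1 '' idl (hsupp α)) ∧
      -- ζ is unique with this property
      (∀ ζ' : {φ : (∀ i, H i) ≃ₗ[S] (∀ i, H i) // Gpred S H ϖ φ} →
          {μ : Ω ≃o Ω // Tpred S H ϖ μ},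
        (∀ φ, ∀ α : ∀ i, H i, idl (hsupp (φ.1 α)) = (ζ' φ).1 '' idl (hsupp α)) → ζ' = ζ) ∧
      -- ζ is a group homomorphism (with respect to composition)
      (∀ φ ψ χ : {φ : (∀ i, H i) ≃ₗ[S] (∀ i, H i) // Gpred S H ϖ φ},
        (∀ α : ∀ i, H i, χ.1 α = φ.1 (ψ.1 α)) →
          ∀ i : Ω, (ζ χ).1 i = (ζ φ).1 ((ζ ψ).1 i)) ∧
      -- ζ is surjective onto T
      (∀ μ : {μ : Ω ≃o Ω // Tpred S H ϖ μ},
        ∃ φ : {φ : (∀ i, H i) ≃ₗ[S] (∀ i, H i) // Gpred S H ϖ φ}, ζ φ = μ) ∧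
      -- the kernel of ζ is GL_P(H)
      (∀ φ : {φ : (∀ i, H i) ≃ₗ[S] (∀ i, H i) // Gpred S H ϖ φ},
        (∀ i : Ω, (ζ φ).1 i = i) ↔ GLPsupp S H φ.1) := by
  have g := mkGood r hr ϖ h31 h32 h33
  choose ζ hζ using fun φ : {φ : (∀ i, H i) ≃ₗ[S] (∀ i, H i) // Gpred S H ϖ φ} =>
    main_T g hassum φ.2
  have U : ∀ (φ : {φ : (∀ i, H i) ≃ₗ[S] (∀ i, H i) // Gpred S H ϖ φ}) (μ : Ω ≃o Ω),
      (∀ i ∉ Kset H, μ i = i) → (∀ α, idl (hsupp (φ.1 α)) = μ '' idl (hsupp α)) →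
      ∀ i, (ζ φ).1 i = μ i := fun φ μ h h' =>
    uniq (ζ φ).2.1 h fun α => by rw [← hζ, h']
  refine ⟨ζ, hζ, ?_, ?_, ?_, ?_⟩
  · intro ζ' h
    funext φ
    apply Subtype.ext
    ext i
    exact (U φ _ (ζ' φ).2.1 (h φ) i).symm
  · intro φ ψ χ h i
    refine U χ ((ζ ψ).1.trans (ζ φ).1) ?_ ?_ i
    · intro i hi
      rw [OrderIso.trans_apply, (ζ ψ).2.1 i hi, (ζ φ).2.1 i hi]
    · intro α
      rw [h, hζ, hζ, ← Set.image_comp]; rfl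
  · intro μ
    obtain ⟨φ, hφ, h⟩ := surj g μ.2
    refine ⟨⟨φ, hφ⟩, Subtype.ext ?_⟩
    ext i
    exact U ⟨φ, hφ⟩ _ μ.2.1 h i
  · intro φ
    constructor
    · intro h α
      rw [hζ]
      have : ((ζ φ).1 : Ω → Ω) = id := funext h
      rw [this, Set.image_id]
    · intro h i
      refine U φ (OrderIso.refl Ω) (fun _ _ => rfl) ?_ i
      intro α
      rw [h α]; simp
end

section
/- Suppose that for every S-submodule C ⊆ H and every S-linear map χ : C → H preserving P-support there exists φ ∈ End_S(H) with φ restricted to C equal to χ. Then (H, P) satisfies Condition (B). Furthermore, if H satisfies the MacWilliams extension property for P-support, then H satisfies Condition (A). -/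
/-- Condition (A): every `H i` is strong pseudo-injective. -/
def CondA (S : Type*) [Ring S] {Ω : Type*} (H : Ω → Type*)
    [∀ i, AddCommGroup (H i)] [∀ i, Module S (H i)] : Prop :=
  ∀ i : Ω, ∀ B : Submodule S (H i), ∀ h : B →ₗ[S] H i, Function.Injective h →
    ∃ τ : H i ≃ₗ[S] H i, ∀ b : B, τ b = h b

/-- Condition (B): `H k` is `H l`-injective whenever `k ≼ l`, `k ≠ l`. -/
def CondB (S : Type*) [Ring S] {Ω : Type*} [PartialOrder Ω] (H : Ω → Type*)
    [∀ i, AddCommGroup (H i)] [∀ i, Module S (H i)] : Prop :=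
  ∀ k l : Ω, k ≤ l → k ≠ l →
    ∀ A : Submodule S (H l), ∀ f : A →ₗ[S] H k, ∃ g : H l →ₗ[S] H k, ∀ a : A, g a = f a

/-- The MacWilliams extension property for `P`-support. -/
def MEPsupp (S : Type*) [Ring S] {Ω : Type*} [PartialOrder Ω] (H : Ω → Type*)
    [∀ i, AddCommGroup (H i)] [∀ i, Module S (H i)] : Prop :=
  ∀ C : Submodule S (∀ i, H i), ∀ f : C →ₗ[S] (∀ i, H i),
    (∀ x : C, idl (hsupp (f x)) = idl (hsupp (x : ∀ i, H i))) →
    ∃ φ : (∀ i, H i) ≃ₗ[S] (∀ i, H i),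
      (∀ α : ∀ i, H i, idl (hsupp (φ α)) = idl (hsupp α)) ∧ ∀ x : C, φ (x : ∀ i, H i) = f x

theorem exists_retr {Ω : Type*} [DecidableEq Ω] {S : Type*} [Ring S] {H : Ω → Type*}
    [∀ i, AddCommGroup (H i)] [∀ i, Module S (H i)] (l : Ω) (A : Submodule S (H l)) :
    ∃ r : (A.map (LinearMap.single S H l)) →ₗ[S] A,
      ∀ x : A.map (LinearMap.single S H l), (x : ∀ i, H i) = Pi.single l (r x : H l) := by
  refine ⟨((LinearMap.proj l : (∀ i, H i) →ₗ[S] H l).comp (Submodule.subtype _)).codRestrict A ?_, ?_⟩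
  · rintro ⟨x, a, ha, rfl⟩
    simpa using ha
  · rintro ⟨x, a, ha, rfl⟩
    simp

theorem idl_hsupp_of {Ω : Type*} [PartialOrder Ω] {H : Ω → Type*} [∀ i, Zero (H i)]
    (l : Ω) (β : ∀ i, H i) (h1 : β l ≠ 0) (h2 : ∀ i, β i ≠ 0 → i ≤ l) :
    idl (hsupp β) = Set.Iic l := by
  ext a
  constructor
  · rintro ⟨b, hb, hab⟩
    exact hab.trans (h2 b hb)
  · intro ha
    exact ⟨l, h1, ha⟩

theorem idl_single {Ω : Type*} [DecidableEq Ω] [PartialOrder Ω] {H : Ω → Type*}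
    [∀ i, Zero (H i)] (l : Ω) (x : H l) (h1 : x ≠ 0) :
    idl (hsupp (Pi.single l x : ∀ i, H i)) = Set.Iic l := by
  apply idl_hsupp_of l
  · simpa using h1
  · intro i hi
    by_contra hn
    have : i ≠ l := fun h => hn h.le
    exact hi (Pi.single_eq_of_ne this x)

theorem stmt5 {Ω : Type*} [Fintype Ω] [Nonempty Ω] [PartialOrder Ω]
    {S : Type*} [Ring S] {H : Ω → Type*} [∀ i, AddCommGroup (H i)] [∀ i, Module S (H i)]
    (hext : ∀ C : Submodule S (∀ i, H i), ∀ χ : C →ₗ[S] (∀ i, H i),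
      (∀ x : C, idl (hsupp (χ x)) = idl (hsupp (x : ∀ i, H i))) →
      ∃ φ : (∀ i, H i) →ₗ[S] (∀ i, H i), ∀ x : C, φ (x : ∀ i, H i) = χ x) :
    CondB S H ∧ (MEPsupp S H → CondA S H) := by
  classical
  constructor
  · intro k l hkl hne A f
    obtain ⟨r, hr⟩ := exists_retr (S := S) l A
    obtain ⟨φ, hφ⟩ := hext _ (((LinearMap.single S H l).comp A.subtype +
      (LinearMap.single S H k).comp f).comp r) (by
        intro x
        rw [hr x]
        by_cases h0 : r x = 0
        · simp [h0]
        · have h0' : (r x : H l) ≠ 0 := by simpa using h0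
          rw [idl_single l _ h0']
          apply idl_hsupp_of l
          · simpa [Pi.single_eq_of_ne hne.symm] using h0
          · intro i hi
            by_contra hn
            have h1 : i ≠ l := fun h => hn h.le
            have h2 : i ≠ k := fun h => hn (h.le.trans hkl)
            exact hi (by simp [Pi.single_eq_of_ne h1, Pi.single_eq_of_ne h2]))
    refine ⟨(LinearMap.proj k).comp (φ.comp (LinearMap.single S H l)), fun a => ?_⟩
    have hx := hφ ⟨LinearMap.single S H l a, a, a.2, rfl⟩
    have hra : r ⟨LinearMap.single S H l a, a, a.2, rfl⟩ = a := by
      have := congrFun (hr ⟨LinearMap.single S H l a, a, a.2, rfl⟩) l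
      simp only [LinearMap.coe_single, Pi.single_eq_same] at this
      exact Subtype.ext this.symm
    have := congrFun hx k
    rw [LinearMap.comp_apply, hra] at this
    simpa [Pi.single_eq_of_ne hne] using this
  · intro hM l A f hf
    obtain ⟨r, hr⟩ := exists_retr (S := S) l A
    obtain ⟨φ, hP, hφ⟩ := hM _ (((LinearMap.single S H l).comp f).comp r) (by
        intro x
        rw [hr x]
        by_cases h0 : r x = 0
        · simp [h0]
        · have h0' : (r x : H l) ≠ 0 := by simpa using h0
          have h1 : f (r x) ≠ 0 := fun h => h0 (hf (by rw [h, map_zero]))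
          rw [idl_single l _ h0']
          exact idl_single l _ h1)
    let τ : H l →ₗ[S] H l :=
      (LinearMap.proj l).comp ((φ : (∀ i, H i) →ₗ[S] (∀ i, H i)).comp (LinearMap.single S H l))
    have hτ : ∀ x, τ x = φ (Pi.single l x) l := fun x => rfl
    have hinj : Function.Injective τ := by
      rw [injective_iff_map_eq_zero]
      intro x hx
      by_contra h0
      have h := hP (Pi.single l x)
      rw [idl_single l x h0] at h
      have hl : l ∈ idl (hsupp (φ (Pi.single l x))) := by rw [h]; exact le_refl l
      obtain ⟨b, hb, hlb⟩ := hl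
      have hb2 : b ∈ idl (hsupp (φ (Pi.single l x))) := ⟨b, hb, le_refl b⟩
      rw [h] at hb2
      have hbl : b = l := le_antisymm hb2 hlb
      subst hbl
      exact hb hx
    have hsurj : Function.Surjective τ := by
      intro y
      by_cases hy : y = 0
      · exact ⟨0, by rw [hy, map_zero]⟩
      obtain ⟨α, hα⟩ := φ.surjective (Pi.single l y)
      have h := hP α
      rw [hα, idl_single l y hy] at h
      refine ⟨α l, ?_⟩
      have h3 : φ (α - Pi.single l (α l)) l = 0 := by
        by_contra hn
        have hl : l ∈ idl (hsupp (φ (α - Pi.single l (α l)))) := ⟨l, hn, le_refl l⟩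
        rw [hP] at hl
        obtain ⟨b, hb, hlb⟩ := hl
        have hbne : b ≠ l := by
          rintro rfl
          exact hb (by simp)
        have hb' : α b ≠ 0 := by
          intro h0
          exact hb (by simp [h0, Pi.single_eq_of_ne hbne])
        have hb2 : b ∈ idl (hsupp α) := ⟨b, hb', le_refl b⟩
        rw [← h] at hb2
        exact hbne (le_antisymm hb2 hlb)
      rw [map_sub, hα, Pi.sub_apply, Pi.single_eq_same, sub_eq_zero] at h3
      rw [hτ, ← h3]
    refine ⟨LinearEquiv.ofBijective τ ⟨hinj, hsurj⟩, fun a => ?_⟩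
    have hx := hφ ⟨LinearMap.single S H l a, a, a.2, rfl⟩
    have hra : r ⟨LinearMap.single S H l a, a, a.2, rfl⟩ = a := by
      have := congrFun (hr ⟨LinearMap.single S H l a, a, a.2, rfl⟩) l
      simp only [LinearMap.coe_single, Pi.single_eq_same] at this
      exact Subtype.ext this.symm
    have := congrFun hx l
    rw [LinearMap.comp_apply, hra] at this
    change φ (Pi.single l (a : H l)) l = f a
    simpa using this
end

section
/- The following three statements are equivalent: (1) for every linear code C ⊆ H and every S-linear map χ : C → H with supp(χ(α)) ⊆ ⟨supp(α)⟩_P for all α ∈ C, there exists φ ∈ R with φ restricted to C equal to χ; (2) for every linear code C ⊆ H and every S-linear map χ : C → H with supp(χ(α)) ⊆ ⟨supp(α)⟩_P for all α ∈ C, there exists φ ∈ End_S(H) with φ restricted to C equal to χ; (3) for all k, l ∈ Ω with k ≼ l, H_k is H_l-injective. -/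
theorem factor_aux {S D M Y : Type*} [Ring S] [AddCommGroup D] [Module S D]
    [AddCommGroup M] [Module S M] [AddCommGroup Y] [Module S Y]
    (p : D →ₗ[S] M) (f : D →ₗ[S] Y) (h : ∀ x, p x = 0 → f x = 0) :
    ∃ fb : LinearMap.range p →ₗ[S] Y, ∀ x, fb ⟨p x, LinearMap.mem_range_self p x⟩ = f x := by
  refine ⟨((LinearMap.ker p).liftQ f (fun x hx => h x hx)) ∘ₗ
    (p.quotKerEquivRange.symm : LinearMap.range p →ₗ[S] _), fun x => ?_⟩
  have : p.quotKerEquivRange.symm ⟨p x, LinearMap.mem_range_self p x⟩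
      = (LinearMap.ker p).mkQ x := by
    rw [LinearEquiv.symm_apply_eq]
    rfl
  simp only [LinearMap.comp_apply, LinearEquiv.coe_coe, this]
  rfl

theorem ext_aux {Ω S : Type*} [Ring S] {H : Ω → Type*} [∀ i, AddCommGroup (H i)]
    [∀ i, Module S (H i)] {Y : Type*} [AddCommGroup Y] [Module S Y]
    (C : Submodule S (∀ i, H i)) (T : Finset Ω)
    (hY : ∀ l ∈ T, ∀ A : Submodule S (H l), ∀ f : A →ₗ[S] Y,
      ∃ g : H l →ₗ[S] Y, ∀ a : A, g a = f a) :
    ∀ f : C →ₗ[S] Y, (∀ x : C, (∀ i ∈ T, (x : ∀ i, H i) i = 0) → f x = 0) →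
    ∃ g : (∀ i, H i) →ₗ[S] Y, (∀ α : ∀ i, H i, (∀ i ∈ T, α i = 0) → g α = 0) ∧
      ∀ x : C, g x = f x := by
  classical
  induction T using Finset.induction_on with
  | empty =>
    intro f hf
    exact ⟨0, by simp, fun x => by simp [hf x (by simp)]⟩
  | insert a T ha ih =>
    intro f hf
    let D : Submodule S C :=
      { carrier := {x | ∀ i ∈ T, (x : ∀ i, H i) i = 0}
        add_mem' := by
          intro x y hx hy i hi
          simp [hx i hi, hy i hi]
        zero_mem' := by
          intro i hi
          simp
        smul_mem' := by
          intro c x hx i hi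
          simp [hx i hi] }
    let q : C →ₗ[S] H a := (LinearMap.proj a : (∀ i, H i) →ₗ[S] H a) ∘ₗ C.subtype
    obtain ⟨fb, hfb⟩ := factor_aux (D := D) (q ∘ₗ D.subtype) (f ∘ₗ D.subtype) (by
      intro x hx
      apply hf
      intro i hi
      rcases Finset.mem_insert.1 hi with rfl | hi
      · exact hx
      · exact x.2 i hi)
    obtain ⟨h, hh⟩ := hY a (Finset.mem_insert_self a T) _ fb
    obtain ⟨g, hg0, hg⟩ := ih (fun l hl => hY l (Finset.mem_insert_of_mem hl)) (f - h ∘ₗ q) (by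
      intro x hx
      have h1 := hfb ⟨x, hx⟩
      rw [← hh] at h1
      have h2 : h (q x) = f x := h1
      simp [h2])
    refine ⟨g + h ∘ₗ LinearMap.proj a, fun α hα => ?_, fun x => ?_⟩
    · simp [hg0 α (fun i hi => hα i (Finset.mem_insert_of_mem hi)),
        hα a (Finset.mem_insert_self a T)]
    · simp [hg x, q]

theorem stmt8 {Ω : Type*} [Fintype Ω] [Nonempty Ω] [PartialOrder Ω]
    {S : Type*} [Ring S] {H : Ω → Type*} [∀ i, AddCommGroup (H i)] [∀ i, Module S (H i)] :
    -- (1): extension within the ring `R`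
    ((∀ C : Submodule S (∀ i, H i), ∀ χ : C →ₗ[S] (∀ i, H i),
        (∀ x : C, hsupp (χ x) ⊆ idl (hsupp (x : ∀ i, H i))) →
        ∃ φ : (∀ i, H i) →ₗ[S] (∀ i, H i),
          (∀ α : ∀ i, H i, hsupp (φ α) ⊆ idl (hsupp α)) ∧
          ∀ x : C, φ (x : ∀ i, H i) = χ x) ↔
      -- (2): extension within `End_S(H)`
      (∀ C : Submodule S (∀ i, H i), ∀ χ : C →ₗ[S] (∀ i, H i),
        (∀ x : C, hsupp (χ x) ⊆ idl (hsupp (x : ∀ i, H i))) →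
        ∃ φ : (∀ i, H i) →ₗ[S] (∀ i, H i), ∀ x : C, φ (x : ∀ i, H i) = χ x)) ∧
    ((∀ C : Submodule S (∀ i, H i), ∀ χ : C →ₗ[S] (∀ i, H i),
        (∀ x : C, hsupp (χ x) ⊆ idl (hsupp (x : ∀ i, H i))) →
        ∃ φ : (∀ i, H i) →ₗ[S] (∀ i, H i), ∀ x : C, φ (x : ∀ i, H i) = χ x) ↔
      -- (3): `H k` is `H l`-injective whenever `k ≼ l`
      (∀ k l : Ω, k ≤ l →
        ∀ A : Submodule S (H l), ∀ f : A →ₗ[S] H k,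
          ∃ g : H l →ₗ[S] H k, ∀ a : A, g a = f a)) := by
  classical
  have h12 : ∀ {p q r : Prop}, (p → q) → (q → r) → (r → p) → ((p ↔ q) ∧ (q ↔ r)) := by
    intro p q r h1 h2 h3
    tauto
  apply h12
  · intro h C χ hχ
    obtain ⟨φ, -, hφ⟩ := h C χ hχ
    exact ⟨φ, hφ⟩
  · intro h k l hkl A f
    let C : Submodule S (∀ i, H i) := A.map (LinearMap.single S H l)
    have hC : ∀ x : C, (x : ∀ i, H i) l ∈ A ∧ (x : ∀ i, H i) = Pi.single l ((x : ∀ i, H i) l) := by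
      rintro ⟨x, a, ha, rfl⟩
      constructor
      · simpa using ha
      · simp
    let p : C →ₗ[S] A :=
      LinearMap.codRestrict A
        ((LinearMap.proj l : (∀ i, H i) →ₗ[S] H l) ∘ₗ C.subtype) (fun x => (hC x).1)
    obtain ⟨φ, hφ⟩ := h C (LinearMap.single S H k ∘ₗ f ∘ₗ p) (by
      intro x i hi
      have hik : i = k := by
        by_contra hne
        apply hi
        simp [hne]
      subst hik
      refine ⟨l, fun h0 => hi ?_, hkl⟩
      have : p x = 0 := Subtype.ext h0
      simp [this])
    refine ⟨LinearMap.proj k ∘ₗ φ ∘ₗ LinearMap.single S H l, fun a => ?_⟩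
    have h1 := hφ ⟨LinearMap.single S H l a, a, a.2, rfl⟩
    have h2 : p ⟨LinearMap.single S H l a, a, a.2, rfl⟩ = a := by
      apply Subtype.ext
      exact Pi.single_eq_same (M := H) l (a : H l)
    simp only [LinearMap.comp_apply, h2] at h1 ⊢
    rw [h1]
    simp
  · intro h C χ hχ
    have key : ∀ k : Ω, ∃ g : (∀ i, H i) →ₗ[S] H k,
        (∀ α : ∀ i, H i, (∀ i ∈ Finset.univ.filter (fun i => k ≤ i), α i = 0) → g α = 0) ∧
        ∀ x : C, g x = (LinearMap.proj k ∘ₗ χ) x := by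
      intro k
      apply ext_aux C
      · intro l hl
        exact h k l (by simpa using hl)
      · intro x hx
        by_contra hne
        obtain ⟨b, hb, hkb⟩ := hχ x (show k ∈ hsupp (χ x) from hne)
        exact hb (hx b (by simpa using hkb))
    choose g hg0 hg using key
    refine ⟨LinearMap.pi g, fun α k hk => ?_, fun x => ?_⟩
    · by_contra hne
      apply hk
      apply hg0 k α
      intro i hi
      by_contra h0
      exact hne ⟨i, h0, by simpa using hi⟩
    · funext k
      exact hg k x
end

section
/- Suppose that the poset P = (Ω, ≼) is a chain (totally ordered), and fix ω : Ω → ℝ^{>0}. Then H satisfies the MacWilliams extension property for (P, ω)-weight if and only if H satisfies Condition (A) and (H, P) satisfies Condition (B). -/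
/-- The `(P,ω)`-weight of `β`. -/
noncomputable def wtw {Ω : Type*} [PartialOrder Ω] {H : Ω → Type*} [∀ i, Zero (H i)]
    (ω : Ω → ℝ) (β : ∀ i, H i) : ℝ :=
  ∑ᶠ i ∈ idl (hsupp β), ω i

/-- The MacWilliams extension property for `(P,ω)`-weight. -/
def MEPweight (S : Type*) [Ring S] {Ω : Type*} [PartialOrder Ω] (H : Ω → Type*)
    [∀ i, AddCommGroup (H i)] [∀ i, Module S (H i)] (ω : Ω → ℝ) : Prop :=
  ∀ C : Submodule S (∀ i, H i), ∀ f : C →ₗ[S] (∀ i, H i),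
    (∀ x : C, wtw ω (f x) = wtw ω (x : ∀ i, H i)) →
    ∃ φ : (∀ i, H i) ≃ₗ[S] (∀ i, H i),
      (∀ α : ∀ i, H i, wtw ω (φ α) = wtw ω α) ∧ ∀ x : C, φ (x : ∀ i, H i) = f x

theorem wtw_eq_iff {Ω : Type*} [Fintype Ω] [PartialOrder Ω]
    {H : Ω → Type*} [∀ i, Zero (H i)]
    (hchain : ∀ a b : Ω, a ≤ b ∨ b ≤ a)
    (ω : Ω → ℝ) (hω : ∀ i : Ω, 0 < ω i) (β γ : ∀ i, H i) :
    wtw ω β = wtw ω γ ↔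
      ∀ i, (∀ j, i ≤ j → β j = 0) ↔ (∀ j, i ≤ j → γ j = 0) := by
  have key : ∀ A B : Set Ω, A ⊆ B → ∀ x ∈ B, x ∉ A →
      ∑ᶠ i ∈ A, ω i < ∑ᶠ i ∈ B, ω i := by
    intro A B hAB x hx hxA
    classical
    rw [finsum_mem_eq_finite_toFinset_sum _ (Set.toFinite A),
      finsum_mem_eq_finite_toFinset_sum _ (Set.toFinite B)]
    apply Finset.sum_lt_sum_of_subset (i := x)
    · simpa using hAB
    · simpa using hx
    · simpa using hxA
    · exact hω x
    · intro j _ _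
      exact (hω j).le
  have mem : ∀ (β : ∀ i, H i) i, i ∈ idl (hsupp β) ↔ ¬ ∀ j, i ≤ j → β j = 0 := by
    intro β i
    simp only [idl, hsupp, Set.mem_ofPred_eq]
    push Not
    constructor
    · rintro ⟨b, h1, h2⟩; exact ⟨b, h2, h1⟩
    · rintro ⟨b, h1, h2⟩; exact ⟨b, h2, h1⟩
  have low : ∀ (β : ∀ i, H i) i j, i ≤ j → j ∈ idl (hsupp β) → i ∈ idl (hsupp β) := by
    rintro β i j hij ⟨b, h1, h2⟩
    exact ⟨b, h1, hij.trans h2⟩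
  have half : ∀ β γ : ∀ i, H i, wtw ω β = wtw ω γ → idl (hsupp β) ⊆ idl (hsupp γ) := by
    intro β γ h x hx
    by_contra hn
    have hs : idl (hsupp γ) ⊆ idl (hsupp β) := by
      intro y hy
      rcases hchain x y with h1 | h1
      · exact absurd (low γ x y h1 hy) hn
      · exact low β y x h1 hx
    exact absurd h (key _ _ hs x hx hn).ne'
  constructor
  · intro h i
    have e : idl (hsupp β) = idl (hsupp γ) := (half _ _ h).antisymm (half _ _ h.symm)
    rw [← not_iff_not, ← mem, ← mem, e]
  · intro h
    have e : idl (hsupp β) = idl (hsupp γ) := by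
      ext i
      rw [mem, mem, h i]
    simp only [wtw, e]

theorem factor_range {S : Type*} [Ring S] {D M N : Type*} [AddCommGroup D] [Module S D]
    [AddCommGroup M] [Module S M] [AddCommGroup N] [Module S N]
    (p : D →ₗ[S] N) (u : D →ₗ[S] M) (h : ∀ x, p x = 0 → u x = 0) :
    ∃ v : LinearMap.range p →ₗ[S] M, ∀ x, v (p.rangeRestrict x) = u x := by
  have hk : LinearMap.ker p ≤ LinearMap.ker u := fun x hx => h x hx
  refine ⟨((LinearMap.ker p).liftQ u hk).comp p.quotKerEquivRange.symm.toLinearMap, ?_⟩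
  intro x
  have : p.quotKerEquivRange.symm (p.rangeRestrict x) = (LinearMap.ker p).mkQ x := by
    rw [LinearEquiv.symm_apply_eq]
    rfl
  simp only [LinearMap.comp_apply, LinearEquiv.coe_coe, this]
  simp

theorem ext_prod {Ω : Type*} {S : Type*} [Ring S] {H : Ω → Type*}
    [∀ i, AddCommGroup (H i)] [∀ i, Module S (H i)]
    {M : Type*} [AddCommGroup M] [Module S M] [DecidableEq Ω] (J : Finset Ω) :
    (∀ l ∈ J, ∀ A : Submodule S (H l), ∀ f : A →ₗ[S] M,
      ∃ g : H l →ₗ[S] M, ∀ a : A, g a = f a) →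
    ∀ (C : Submodule S (∀ i, H i)) (u : C →ₗ[S] M),
    (∀ x : C, (∀ j ∈ J, (x : ∀ i, H i) j = 0) → u x = 0) →
    ∃ g : (∀ i, H i) →ₗ[S] M, (∀ x : C, g x = u x) ∧
      ∀ x, (∀ j ∈ J, x j = 0) → g x = 0 := by
  induction J using Finset.induction_on with
  | empty =>
    intro _ C u hu
    exact ⟨0, fun x => by simp [hu x (by simp)], fun x _ => rfl⟩
  | insert j J hj ih =>
    intro hM C u hu
    let D : Submodule S C :=
      { carrier := {x | ∀ k ∈ J, (x : ∀ i, H i) k = 0}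
        add_mem' := fun {a b} ha hb k hk => by simp [ha k hk, hb k hk]
        zero_mem' := fun k hk => rfl
        smul_mem' := fun c x hx k hk => by simp [hx k hk] }
    let p : D →ₗ[S] H j :=
      (LinearMap.proj j : (∀ i, H i) →ₗ[S] H j).comp (C.subtype.comp D.subtype)
    let u' : D →ₗ[S] M := u.comp D.subtype
    have hpu : ∀ x : D, p x = 0 → u' x = 0 := by
      intro x hx
      refine hu x (fun k hk => ?_)
      rcases Finset.mem_insert.1 hk with rfl | hk
      · exact hx
      · exact x.2 k hk
    obtain ⟨v, hv⟩ := factor_range (S := S) (D := D) (M := M) (N := H j) p u' hpu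
    obtain ⟨g, hg⟩ := hM j (Finset.mem_insert_self _ _) _ v
    obtain ⟨g', h1, h2⟩ := ih (fun l hl => hM l (Finset.mem_insert_of_mem hl)) C
      (u - (g.comp (LinearMap.proj j : (∀ i, H i) →ₗ[S] H j)).comp C.subtype) (by
        intro x hx
        have e1 := hv ⟨x, hx⟩
        rw [← hg] at e1
        have e2 : g ((x : ∀ i, H i) j) = u x := e1
        simp [e2])
    refine ⟨g' + g.comp (LinearMap.proj j : (∀ i, H i) →ₗ[S] H j), ?_, ?_⟩
    · intro x
      simp [h1]
    · intro x hx
      have := h2 x (fun k hk => hx k (Finset.mem_insert_of_mem hk))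
      simp [this, hx j (Finset.mem_insert_self _ _)]

theorem stmt10 {Ω : Type*} [Fintype Ω] [Nonempty Ω] [PartialOrder Ω]
    {S : Type*} [Ring S] {H : Ω → Type*} [∀ i, AddCommGroup (H i)] [∀ i, Module S (H i)]
    (hchain : ∀ a b : Ω, a ≤ b ∨ b ≤ a)
    (ω : Ω → ℝ) (hω : ∀ i : Ω, 0 < ω i) :
    MEPweight S H ω ↔ CondA S H ∧ CondB S H := by
  classical
  have W := fun β γ : ∀ i, H i => wtw_eq_iff hchain ω hω β γ
  have hlt : ∀ a b : Ω, ¬ a ≤ b → b < a := fun a b h =>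
    lt_of_le_not_ge ((hchain a b).resolve_left h) h
  constructor
  · intro hM
    -- maps out of a single coordinate
    have ext1 : ∀ (l : Ω) (A : Submodule S (H l)) (q : A →ₗ[S] (∀ i, H i)),
        (∀ a : A, wtw ω (q a) = wtw ω (Pi.single l (a : H l))) →
        ∃ φ : (∀ i, H i) ≃ₗ[S] (∀ i, H i),
          (∀ α : ∀ i, H i, wtw ω (φ α) = wtw ω α) ∧ ∀ a : A, φ (Pi.single l (a : H l)) = q a := by
      intro l A q hq
      let p : A →ₗ[S] (∀ i, H i) := (LinearMap.single S H l).comp A.subtype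
      obtain ⟨v, hv⟩ := factor_range (S := S) (D := A) (M := ∀ i, H i) (N := ∀ i, H i) p q (fun x hx => by
        have h0 : (x : H l) = 0 := by
          have := congrFun hx l
          simpa [p] using this
        have : x = 0 := Subtype.ext h0
        simp [this])
      obtain ⟨φ, h1, h2⟩ := hM (LinearMap.range p) v (by
        rintro ⟨_, a, rfl⟩
        exact (congrArg (wtw ω) (hv a)).trans (hq a))
      exact ⟨φ, h1, fun a => (h2 (p.rangeRestrict a)).trans (hv a)⟩
    constructor
    · intro i B h hinj
      obtain ⟨φ, h1, h2⟩ := ext1 i B ((LinearMap.single S H i).comp h) (by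
        intro a
        rw [W]
        intro k
        have hz : h a = 0 ↔ (a : H i) = 0 := by
          rw [map_eq_zero_iff h hinj]; simp
        constructor
        · intro hh j hj
          by_cases e : j = i
          · subst e
            have := hh j hj
            simpa [hz] using this
          · simp [e]
        · intro hh j hj
          by_cases e : j = i
          · subst e
            have := hh j hj
            simpa [hz] using this
          · simp [e])
      have hφ := fun α => (W _ _).1 (h1 α)
      let τ : H i →ₗ[S] H i := (LinearMap.proj i).comp (φ.toLinearMap.comp (LinearMap.single S H i))
      have hτ : ∀ x, τ x = φ (Pi.single i x) i := fun x => rfl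
      have single_hi : ∀ (x : H i) k j, i < k → k ≤ j → (Pi.single i x : ∀ i, H i) j = 0 := by
        intro x k j hk hj
        have : j ≠ i := (hk.trans_le hj).ne'
        simp [this]
      have τinj : Function.Injective τ := by
        rw [injective_iff_map_eq_zero]
        intro x hx
        have := (hφ (Pi.single i x) i).1 (by
          intro j hj
          rcases hj.eq_or_lt with rfl | hj
          · exact hx
          · exact (hφ (Pi.single i x) j).2 (fun m hm => single_hi x j m hj hm) j le_rfl)
        simpa using this i le_rfl
      have τsurj : Function.Surjective τ := by
        intro y
        let z := φ.symm (Pi.single i y)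
        have hz : φ z = Pi.single i y := φ.apply_symm_apply _
        have hz0 : ∀ j, i < j → z j = 0 := by
          intro j hj
          exact (hφ z j).1 (by
            intro m hm
            rw [hz]
            exact single_hi y j m hj hm) j le_rfl
        refine ⟨z i, ?_⟩
        have := (hφ (Pi.single i (z i) - z) i).2 (by
          intro j hj
          rcases hj.eq_or_lt with rfl | hj
          · simp
          · simp [hz0 j hj, hj.ne']) i le_rfl
        rw [map_sub, hz] at this
        rw [hτ]
        simpa [sub_eq_zero] using this
      refine ⟨LinearEquiv.ofBijective τ ⟨τinj, τsurj⟩, fun b => ?_⟩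
      have := congrFun (h2 b) i
      change φ (Pi.single i (b : H i)) i = h b
      simpa using this
    · intro k l hkl hne A f
      obtain ⟨φ, h1, h2⟩ := ext1 l A
        ((LinearMap.single S H l).comp A.subtype + (LinearMap.single S H k).comp f) (by
        intro a
        rw [W]
        intro m
        constructor
        · intro hh j hj
          by_cases e : j = l
          · subst e
            have := hh j hj
            simpa [hne.symm] using this
          · simp [e]
        · intro hh j hj
          by_cases e : m ≤ l
          · have h0 : a = 0 := by
              have := hh l e
              simpa using this
            simp [h0]
          · have hml := hlt _ _ e
            have e1 : j ≠ l := (hml.trans_le hj).ne'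
            have e2 : j ≠ k := ((hkl.trans_lt hml).trans_le hj).ne'
            simp [e1, e2])
      refine ⟨(LinearMap.proj k).comp (φ.toLinearMap.comp (LinearMap.single S H l)), fun a => ?_⟩
      have := congrFun (h2 a) k
      simpa [hne] using this
  · rintro ⟨hA, hB⟩ C f hf
    have hf := fun x => (W _ _).1 (hf x)
    have main : ∀ i, ∃ (τ : H i ≃ₗ[S] H i) (g : (∀ i, H i) →ₗ[S] H i),
        (∀ x : C, τ ((x : ∀ i, H i) i) + g x = f x i) ∧
        ∀ x, (∀ j, i < j → x j = 0) → g x = 0 := by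
      intro i
      let D : Submodule S C :=
        { carrier := {x | ∀ k, i < k → (x : ∀ i, H i) k = 0}
          add_mem' := fun {a b} ha hb k hk => by simp [ha k hk, hb k hk]
          zero_mem' := fun k hk => rfl
          smul_mem' := fun c x hx k hk => by simp [hx k hk] }
      let p : D →ₗ[S] H i :=
        (LinearMap.proj i : (∀ i, H i) →ₗ[S] H i).comp (C.subtype.comp D.subtype)
      have hp : ∀ x : D, p x = (x : ∀ i, H i) i := fun x => rfl
      have hpf : ∀ x : D, p x = 0 ↔ f x i = 0 := by
        intro x
        constructor
        · intro hx
          refine (hf x i).2 ?_ i le_rfl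
          intro j hj
          rcases hj.eq_or_lt with rfl | hj
          · exact hx
          · exact x.2 j hj
        · intro hx
          refine (hf x i).1 ?_ i le_rfl
          intro j hj
          rcases hj.eq_or_lt with rfl | hj
          · exact hx
          · exact (hf x j).2 (fun m hm => x.2 m (hj.trans_le hm)) j le_rfl
      let u' : D →ₗ[S] H i :=
        (LinearMap.proj i : (∀ i, H i) →ₗ[S] H i).comp (f.comp D.subtype)
      have hpu : ∀ x : D, p x = 0 → u' x = 0 := fun x hx => (hpf x).1 hx
      obtain ⟨v, hv⟩ := factor_range (S := S) (D := D) (M := H i) (N := H i) p u' hpu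
      obtain ⟨τ, hτ⟩ := hA i _ v (by
        rw [injective_iff_map_eq_zero]
        rintro ⟨_, x, rfl⟩ hx
        have e : f x i = 0 := (hv x).symm.trans hx
        exact Subtype.ext ((hpf x).2 e))
      obtain ⟨g, h1, h2⟩ := ext_prod (S := S) (H := H) (M := H i)
        (Finset.univ.filter (fun j => i < j))
        (fun l hl => by
          have hl : i < l := by simpa using hl
          exact hB i l hl.le hl.ne) C
        ((LinearMap.proj i : (∀ i, H i) →ₗ[S] H i).comp f -
          τ.toLinearMap.comp ((LinearMap.proj i : (∀ i, H i) →ₗ[S] H i).comp C.subtype))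
        (by
          intro x hx
          have hx : ∀ j, i < j → (x : ∀ i, H i) j = 0 := fun j hj => hx j (by simpa using hj)
          have e1 := hv ⟨x, hx⟩
          rw [← hτ] at e1
          have e2 : τ ((x : ∀ i, H i) i) = f x i := e1
          simp [e2])
      refine ⟨τ, g, ?_, ?_⟩
      · intro x
        rw [h1]
        simp
      · intro x hx
        exact h2 x (fun j hj => hx j (by simpa using hj))
    choose τ g h1 h2 using main
    let φ : (∀ i, H i) →ₗ[S] (∀ i, H i) :=
      LinearMap.pi (fun i => (τ i).toLinearMap.comp (LinearMap.proj i) + g i)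
    have hφ : ∀ x i, φ x i = τ i (x i) + g i x := fun x i => rfl
    have top : ∀ y : ∀ i, H i, y ≠ 0 → ∃ k, y k ≠ 0 ∧ ∀ j, k < j → y j = 0 := by
      intro y hy
      obtain ⟨i, hi⟩ := Function.ne_iff.1 hy
      obtain ⟨k, hk⟩ := (Set.toFinite {k | y k ≠ 0}).exists_maximal ⟨i, hi⟩
      refine ⟨k, hk.1, fun j hj => ?_⟩
      by_contra hn
      exact absurd (hk.2 hn hj.le) hj.not_ge
    have hV : ∀ x i, (∀ j, i ≤ j → φ x j = 0) ↔ (∀ j, i ≤ j → x j = 0) := by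
      intro x i
      constructor
      · intro h
        by_contra hn
        have hx : x ≠ 0 := by
          rintro rfl
          exact hn (fun _ _ => rfl)
        obtain ⟨k, hk, hk2⟩ := top x hx
        have hik : i ≤ k := by
          by_contra hik
          exact hn (fun j hj => hk2 j ((hlt _ _ hik).trans_le hj))
        have := h k hik
        rw [hφ, h2 k x hk2] at this
        simp at this
        exact hk this
      · intro h j hj
        rw [hφ, h j hj, h2 j x (fun m hm => h m (hj.trans hm.le))]
        simp
    have hinj : Function.Injective φ := by
      rw [injective_iff_map_eq_zero]
      intro x hx
      ext i
      exact (hV x i).1 (fun j _ => by simp [hx]) i le_rfl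
    have hsurj' : ∀ i, ∀ y : ∀ i, H i, (∀ j, i < j → y j = 0) → ∃ x, φ x = y := by
      intro i
      induction i using WellFoundedLT.induction with
      | ind i ih =>
        intro y hy
        let x : ∀ i, H i := Pi.single i ((τ i).symm (y i))
        have hx : ∀ j, i < j → x j = 0 := fun j hj => by simp [x, hj.ne']
        have hz : ∀ j, i ≤ j → (y - φ x) j = 0 := by
          intro j hj
          rw [Pi.sub_apply, hφ, h2 j x (fun m hm => hx m (hj.trans_lt hm))]
          rcases hj.eq_or_lt with rfl | hj
          · simp [x]
          · simp [hx j hj, hy j hj]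
        by_cases hz0 : y - φ x = 0
        · exact ⟨x, (sub_eq_zero.1 hz0).symm⟩
        · obtain ⟨k, hk, hk2⟩ := top _ hz0
          have hki : k < i := hlt _ _ (fun h => hk (hz k h))
          obtain ⟨w, hw⟩ := ih k hki _ hk2
          exact ⟨w + x, by rw [map_add, hw]; simp⟩
    have hsurj : Function.Surjective φ := by
      intro y
      by_cases hy : y = 0
      · exact ⟨0, by simp [hy]⟩
      · obtain ⟨k, _, hk2⟩ := top y hy
        exact hsurj' k y hk2
    refine ⟨LinearEquiv.ofBijective φ ⟨hinj, hsurj⟩, fun α => (W _ _).2 (hV α), fun x => ?_⟩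
    ext i
    exact h1 i x
end

section
/- Assume that either (H is finite and H_k is H_l-injective for all k, l ∈ Ω with k ≼ l) or (S is a division ring and H is a finite dimensional left S-module). Then H satisfies the MacWilliams extension property for P-support. -/
theorem aux_atom {S M : Type*} [Ring S] [AddCommGroup M] [Module S M] [Finite M]
    (A T : Submodule S M) (f : A →ₗ[S] M) (hf : Function.Injective f) (hTA : ¬ T ≤ A) :
    ∃ u : T →ₗ[S] M, ¬ LinearMap.range u ≤ LinearMap.range f := by
  by_contra hcon
  push Not at hcon
  let e := LinearEquiv.ofInjective f hf
  let Φ : (T →ₗ[S] M) → (T →ₗ[S] M) := fun u =>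
    A.subtype ∘ₗ e.symm.toLinearMap ∘ₗ
      (u.codRestrict (LinearMap.range f) (fun t => hcon u ⟨t, rfl⟩))
  have hΦ : Function.Injective Φ := by
    intro u v huv
    ext t
    have h := LinearMap.congr_fun huv t
    have h2 := e.symm.injective (Subtype.ext h)
    exact congrArg Subtype.val h2
  have : Finite (T →ₗ[S] M) := DFunLike.finite _
  obtain ⟨u, hu⟩ := Finite.surjective_of_injective hΦ T.subtype
  apply hTA
  intro t ht
  have h := LinearMap.congr_fun hu ⟨t, ht⟩
  have h' : t = Φ u ⟨t, ht⟩ := h.symm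
  rw [h']
  exact (e.symm _).2

theorem aux_fin {S M : Type*} [Ring S] [AddCommGroup M] [Module S M] [Finite M]
    (hinj : ∀ A : Submodule S M, ∀ f : A →ₗ[S] M, ∃ g : M →ₗ[S] M, ∀ a : A, g a = f a)
    (A : Submodule S M) : ∀ f : A →ₗ[S] M, Function.Injective f →
      ∃ g : M →ₗ[S] M, Function.Injective g ∧ ∀ a : A, g a = f a := by
  induction A using WellFoundedGT.induction with
  | ind A ih =>
  intro f hf
  by_cases hall : ∀ T : Submodule S M, IsAtom T → T ≤ A
  · obtain ⟨g, hg⟩ := hinj A f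
    refine ⟨g, ?_, hg⟩
    rw [← LinearMap.ker_eq_bot]
    rcases IsAtomic.eq_bot_or_exists_atom_le (LinearMap.ker g) with h | ⟨T, hT, hTk⟩
    · exact h
    · exfalso
      apply hT.1
      rw [eq_bot_iff]
      intro t ht
      have h1 : g t = 0 := hTk ht
      have h2 : f ⟨t, hall T hT ht⟩ = 0 := by rw [← hg]; exact h1
      have h3 := (map_eq_zero_iff f hf).1 h2
      simpa using congrArg Subtype.val h3
  · push Not at hall
    obtain ⟨T, hT, hTA⟩ := hall
    obtain ⟨u, hu⟩ := aux_atom A T f hf hTA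
    have : IsSimpleModule S T := isSimpleModule_iff_isAtom.2 hT
    have hcomap : Submodule.comap u (LinearMap.range f) = ⊥ := by
      rcases eq_bot_or_eq_top (Submodule.comap u (LinearMap.range f)) with h | h
      · exact h
      · exfalso
        apply hu
        rintro _ ⟨t, rfl⟩
        have : t ∈ Submodule.comap u (LinearMap.range f) := h ▸ Submodule.mem_top
        exact this
    have hdis : Disjoint A T := by
      rw [disjoint_comm]
      exact hT.not_le_iff_disjoint.1 hTA
    let F : M →ₗ.[S] M := ⟨A, f⟩
    let U : M →ₗ.[S] M := ⟨T, u⟩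
    have hFU := LinearPMap.sup_h_of_disjoint F U hdis
    let G := F.sup U hFU
    have hlt : A < A ⊔ T := left_lt_sup.2 hTA
    have key : ∀ (a : A) (t : T) (z : ↥(A ⊔ T)), (a : M) + t = z → G.toFun z = f a + u t :=
      fun a t z h => LinearPMap.sup_apply (f := F) (g := U) hFU a t z h
    have hG : Function.Injective (G.toFun : ↥(A ⊔ T) →ₗ[S] M) := by
      rw [injective_iff_map_eq_zero]
      intro z hz
      obtain ⟨a, ha, t, ht, hat⟩ := Submodule.mem_sup.1 z.2
      have h := key ⟨a, ha⟩ ⟨t, ht⟩ z hat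
      rw [hz] at h
      have ht0 : (⟨t, ht⟩ : T) ∈ Submodule.comap u (LinearMap.range f) := by
        refine ⟨-⟨a, ha⟩, ?_⟩
        rw [map_neg]
        exact neg_eq_of_add_eq_zero_right h.symm
      rw [hcomap, Submodule.mem_bot] at ht0
      rw [ht0, map_zero, add_zero] at h
      have ha0 := (map_eq_zero_iff f hf).1 h.symm
      apply Subtype.ext
      have e1 : t = 0 := congrArg Subtype.val ht0
      have e2 : a = 0 := congrArg Subtype.val ha0
      rw [← hat, e1, e2, add_zero]
      rfl
    obtain ⟨g, hg, hgG⟩ := ih (A ⊔ T) hlt G.toFun hG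
    refine ⟨g, hg, fun a => ?_⟩
    have h1 := hgG ⟨a, Submodule.mem_sup_left a.2⟩
    have h2 := key a 0 ⟨a, Submodule.mem_sup_left a.2⟩ (by simp)
    rw [map_zero, add_zero] at h2
    exact h1.trans h2

theorem aux_factor {S C X Y : Type*} [Ring S] [AddCommGroup C] [Module S C]
    [AddCommGroup X] [Module S X] [AddCommGroup Y] [Module S Y]
    (r : C →ₗ[S] X) (p : C →ₗ[S] Y) (h : ∀ c, r c = 0 → p c = 0) :
    ∃ q : LinearMap.range r →ₗ[S] Y, ∀ c, q ⟨r c, c, rfl⟩ = p c := by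
  refine ⟨((LinearMap.ker r).liftQ p h) ∘ₗ r.quotKerEquivRange.symm.toLinearMap, fun c => ?_⟩
  have : r.quotKerEquivRange.symm ⟨r c, c, rfl⟩ = (LinearMap.ker r).mkQ c := by
    rw [LinearEquiv.symm_apply_eq]
    rfl
  rw [LinearMap.comp_apply, LinearEquiv.coe_coe, this]
  exact Submodule.liftQ_apply _ _ _

theorem aux_ext {Ω : Type*} {S : Type*} [Ring S] {H : Ω → Type*} [∀ i, AddCommGroup (H i)]
    [∀ i, Module S (H i)] {Y : Type*} [AddCommGroup Y] [Module S Y] (s : Finset Ω)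
    (hinj : ∀ l ∈ s, ∀ A : Submodule S (H l), ∀ f : A →ₗ[S] Y,
            ∃ g : H l →ₗ[S] Y, ∀ a : A, g a = f a) (C : Submodule S (∀ i, H i)) :
    ∀ (p : C →ₗ[S] Y),
    (∀ x : C, (∀ i ∈ s, (x : ∀ i, H i) i = 0) → p x = 0) →
    ∃ g : (∀ i, H i) →ₗ[S] Y, (∀ x : C, g x = p x) ∧ ∀ x, (∀ i ∈ s, x i = 0) → g x = 0 := by
  classical
  induction s using Finset.induction_on with
  | empty =>
    intro p hp
    exact ⟨0, fun x => (hp x (by simp)).symm, by simp⟩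
  | insert j s hj ih =>
    intro p hp
    let C' : Submodule S C :=
      { carrier := {x | ∀ i ∈ s, (x : ∀ i, H i) i = 0}
        zero_mem' := by simp
        add_mem' := by
          intro a b ha hb i hi
          simp [ha i hi, hb i hi]
        smul_mem' := by
          intro c a ha i hi
          simp [ha i hi] }
    obtain ⟨q, hq⟩ := aux_factor (C := C') ((LinearMap.proj j) ∘ₗ C.subtype ∘ₗ C'.subtype)
      (p ∘ₗ C'.subtype) (by
        intro c hc
        apply hp
        intro i hi
        rcases Finset.mem_insert.1 hi with rfl | hi
        · exact hc
        · exact c.2 i hi)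
    obtain ⟨q', hq'⟩ := hinj j (Finset.mem_insert_self _ _) _ q
    obtain ⟨g, hg1, hg2⟩ := ih (fun l hl => hinj l (Finset.mem_insert_of_mem hl))
      (p - q' ∘ₗ LinearMap.proj j ∘ₗ C.subtype) (by
        intro x hx
        have h1 := hq ⟨x, hx⟩
        rw [← hq'] at h1
        exact sub_eq_zero.2 h1.symm)
    refine ⟨g + q' ∘ₗ LinearMap.proj j, fun x => ?_, fun x hx => ?_⟩
    · simp [hg1]
    · simp [hg2 x (fun i hi => hx i (Finset.mem_insert_of_mem hi)), hx j (Finset.mem_insert_self _ _)]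

theorem aux_main {Ω : Type*} [Fintype Ω] [PartialOrder Ω]
    {S : Type*} [Ring S] {H : Ω → Type*} [∀ i, AddCommGroup (H i)] [∀ i, Module S (H i)]
    [IsArtinian S (∀ i, H i)]
    (hinj : ∀ k l : Ω, k ≤ l → ∀ A : Submodule S (H l), ∀ f : A →ₗ[S] H k,
            ∃ g : H l →ₗ[S] H k, ∀ a : A, g a = f a)
    (haut : ∀ k, ∀ A : Submodule S (H k), ∀ f : A →ₗ[S] H k, Function.Injective f →
      ∃ g : H k →ₗ[S] H k, Function.Injective g ∧ ∀ a : A, g a = f a) :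
    MEPsupp S H := by
  classical
  intro C f hf
  have hidl : ∀ (α : ∀ i, H i) k, (∀ i, k < i → α i = 0) →
      (k ∈ idl (hsupp α) ↔ α k ≠ 0) := by
    intro α k h
    constructor
    · rintro ⟨b, hb, hkb⟩
      rcases hkb.eq_or_lt with rfl | hlt
      · exact hb
      · exact absurd (h b hlt) hb
    · intro h
      exact ⟨k, h, le_rfl⟩
  have hidl0 : ∀ (α : ∀ i, H i) k, k ∉ idl (hsupp α) → α k = 0 := by
    intro α k h
    by_contra h'
    exact h ⟨k, h', le_rfl⟩
  have hf0 : ∀ (x : C) k, (∀ i, k < i → (x : ∀ i, H i) i = 0) →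
      (f x k = 0 ↔ (x : ∀ i, H i) k = 0) := by
    intro x k h
    have h1 := hidl x k h
    have h2 := hidl (f x) k (by
      intro i hi
      apply hidl0
      rw [hf]
      rintro ⟨b, hb, hib⟩
      exact hb (h b (hi.trans_le hib)))
    rw [hf, h1] at h2
    exact (not_iff_not.1 h2).symm
  have hex : ∀ k, ∃ (h : H k →ₗ[S] H k) (g : (∀ i, H i) →ₗ[S] H k), Function.Injective h ∧
      (∀ α : ∀ i, H i, (∀ i, k < i → α i = 0) → g α = 0) ∧
      ∀ x : C, f x k = h ((x : ∀ i, H i) k) + g x := by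
    intro k
    let C' : Submodule S C :=
      { carrier := {x | ∀ i, k < i → (x : ∀ i, H i) i = 0}
        zero_mem' := by simp
        add_mem' := by
          intro a b ha hb i hi
          simp [ha i hi, hb i hi]
        smul_mem' := by
          intro c a ha i hi
          simp [ha i hi] }
    obtain ⟨q, hq⟩ := aux_factor (C := C') ((LinearMap.proj k) ∘ₗ C.subtype ∘ₗ C'.subtype)
      ((LinearMap.proj k) ∘ₗ f ∘ₗ C'.subtype) (fun c hc => (hf0 c.1 k c.2).2 hc)
    obtain ⟨h, hh, hhq⟩ := haut k _ q (by
      rw [injective_iff_map_eq_zero]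
      rintro ⟨_, c, rfl⟩ hc
      rw [hq] at hc
      exact Subtype.ext ((hf0 c.1 k c.2).1 hc))
    obtain ⟨g, hg1, hg2⟩ := aux_ext (Finset.univ.filter (fun l => k < l))
      (fun l hl => hinj k l (Finset.mem_filter.1 hl).2.le) C
      (LinearMap.proj k ∘ₗ f - h ∘ₗ LinearMap.proj k ∘ₗ C.subtype) (by
        intro x hx
        have h1 := hq ⟨x, fun i hi => hx i (by simp [hi])⟩
        rw [← hhq] at h1
        exact sub_eq_zero.2 h1.symm)
    refine ⟨h, g, hh, fun α hα => hg2 α (by simpa using hα), fun x => ?_⟩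
    rw [hg1]
    simp
  choose h g hh hg hfx using hex
  let ψ : (∀ i, H i) →ₗ[S] (∀ i, H i) := LinearMap.pi (fun k => h k ∘ₗ LinearMap.proj k + g k)
  have hψ : ∀ α k, ψ α k = h k (α k) + g k α := fun α k => rfl
  have hmax : ∀ (α : ∀ i, H i) k, α k ≠ 0 → ∃ l, k ≤ l ∧ α l ≠ 0 ∧ ψ α l ≠ 0 := by
    intro α k hk
    obtain ⟨l, hkl, hl⟩ := (Set.toFinite (hsupp α)).exists_le_maximal (a := k) hk
    refine ⟨l, hkl, hl.1, ?_⟩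
    rw [hψ, hg l α, add_zero]
    · exact fun h0 => hl.1 ((map_eq_zero_iff _ (hh l)).1 h0)
    · intro i hi
      by_contra hne
      exact hl.not_prop_of_gt hi hne
  have hinjψ : Function.Injective ψ := by
    rw [injective_iff_map_eq_zero]
    intro α hα
    ext k
    by_contra hne
    obtain ⟨l, _, _, h2⟩ := hmax α k hne
    exact h2 (by rw [hα]; rfl)
  refine ⟨LinearEquiv.ofBijective ψ (IsArtinian.bijective_of_injective_endomorphism ψ hinjψ),
    fun α => ?_, fun x => ?_⟩
  · change idl (hsupp (ψ α)) = _
    ext a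
    constructor
    · rintro ⟨b, hb, hab⟩
      by_contra hcon
      have h0 : ∀ i, b ≤ i → α i = 0 := by
        intro i hi
        by_contra hne
        exact hcon ⟨i, hne, hab.trans hi⟩
      apply hb
      rw [hψ, h0 b le_rfl, hg b α (fun i hi => h0 i hi.le), map_zero, add_zero]
    · rintro ⟨b, hb, hab⟩
      obtain ⟨l, hbl, _, hl⟩ := hmax α b hb
      exact ⟨l, hl, hab.trans hbl⟩
  · change ψ x = f x
    ext k
    rw [hψ, hfx]

theorem aux_div {K M : Type*} [DivisionRing K] [AddCommGroup M] [Module K M] [Module.Finite K M]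
    (A : Submodule K M) (f : A →ₗ[K] M) (hf : Function.Injective f) :
    ∃ g : M →ₗ[K] M, Function.Injective g ∧ ∀ a : A, g a = f a := by
  obtain ⟨g, hg⟩ := Submodule.exists_linearEquiv_restrict_eq (LinearEquiv.ofInjective f hf)
  exact ⟨g.toLinearMap, g.injective, fun a => (hg a).symm⟩

theorem aux_div_main {Ω : Type*} [Fintype Ω] [PartialOrder Ω]
    {S : Type*} [DivisionRing S] {H : Ω → Type*} [∀ i, AddCommGroup (H i)] [∀ i, Module S (H i)]
    [Module.Finite S (∀ i, H i)] : MEPsupp S H := by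
  classical
  have hfin : ∀ k, Module.Finite S (H k) := fun k =>
    Module.Finite.of_surjective (LinearMap.proj k : (∀ i, H i) →ₗ[S] H k)
      (LinearMap.proj_surjective k)
  apply aux_main
  · intro k l _ A f
    obtain ⟨g, hg⟩ := f.exists_extend
    exact ⟨g, fun a => LinearMap.congr_fun hg a⟩
  · intro k A f hf
    exact aux_div A f hf

theorem stmt11 {Ω : Type*} [Fintype Ω] [Nonempty Ω] [PartialOrder Ω]
    {S : Type*} [Ring S] {H : Ω → Type*} [∀ i, AddCommGroup (H i)] [∀ i, Module S (H i)]
    (hyp :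
      -- either `H` is finite and `H k` is `H l`-injective for all `k ≼ l`
      (Finite (∀ i, H i) ∧
        ∀ k l : Ω, k ≤ l →
          ∀ A : Submodule S (H l), ∀ f : A →ₗ[S] H k,
            ∃ g : H l →ₗ[S] H k, ∀ a : A, g a = f a) ∨
      -- or `S` is a division ring and `H` is a finite-dimensional left `S`-module
      (Nontrivial S ∧ (∀ a : S, a ≠ 0 → IsUnit a) ∧ Module.Finite S (∀ i, H i))) :
    MEPsupp S H := by
  classical
  rcases hyp with ⟨hfin, hinj⟩ | ⟨hnt, hu, hfin⟩
  · have hfk : ∀ k, Finite (H k) := fun k =>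
      Finite.of_surjective (LinearMap.proj k : (∀ i, H i) →ₗ[S] H k)
        (LinearMap.proj_surjective k)
    exact aux_main hinj (fun k => aux_fin (hinj k k le_rfl))
  · letI : DivisionRing S := DivisionRing.ofIsUnitOrEqZero
      (fun a => or_iff_not_imp_right.2 (hu a))
    exact aux_div_main
end

section
/- Let X be a set and Γ a finite collection of subsets of X with X ∈ Γ, closed under pairwise intersections, and with ∅ ∉ Γ. Let I and J be finite sets and let ((U_i)_{i∈I}, (V_j)_{j∈J}) ∈ Γ^I × Γ^J be a solution to the isometry equation. Then |I| = |J|. -/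
theorem stmt12 {X : Type*} (Γ : Finset (Set X))
    (hX : Set.univ ∈ Γ)
    (hinter : ∀ A ∈ Γ, ∀ B ∈ Γ, A ∩ B ∈ Γ)
    (hempty : (∅ : Set X) ∉ Γ)
    {I J : Type*} [Fintype I] [Fintype J]
    (U : I → Set X) (V : J → Set X)
    (hU : ∀ i : I, U i ∈ Γ) (hV : ∀ j : J, V j ∈ Γ)
    (hsol : ∀ x : X,
      (∑ i : I, (U i).indicator (fun _ => (1 : ℤ)) x) =
        ∑ j : J, (V j).indicator (fun _ => (1 : ℤ)) x) :
    Fintype.card I = Fintype.card J := by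
  classical
  have key : ∀ S : Finset (Set X), S ⊆ Γ → (⋂ A ∈ S, A) ∈ Γ := by
    intro S
    induction S using Finset.induction_on with
    | empty => intro _; simpa using hX
    | insert a S ha ih =>
      intro h
      rw [Finset.set_biInter_insert]
      exact hinter _ (h (Finset.mem_insert_self a S)) _
        (ih (fun y hy => h (Finset.mem_insert_of_mem hy)))
  have hne : (⋂ A ∈ Γ, A).Nonempty := by
    rw [Set.nonempty_iff_ne_empty]
    intro h
    exact hempty (h ▸ key Γ (Finset.Subset.refl Γ))
  obtain ⟨x, hx⟩ := hne
  have hx' : ∀ A ∈ Γ, x ∈ A := by simpa using hx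
  have h := hsol x
  rw [Finset.sum_congr rfl (fun i _ => Set.indicator_of_mem (hx' _ (hU i)) _),
    Finset.sum_congr rfl (fun j _ => Set.indicator_of_mem (hx' _ (hV j)) _)] at h
  simpa using h
end

section
/- Let X be a set and Γ a finite collection of subsets of X with X ∈ Γ, closed under pairwise intersections (so that (Γ, ⊆) is a lattice, with Möbius function μ), and with ∅ ∉ Γ. Let Λ = {C ∈ Γ : C ≠ ⟨{x}⟩_Γ for all x ∈ X}, assume Λ ≠ ∅, and set n = min{ (1/2) Σ_{U ∈ Γ, U ⊆ W} |μ(U, W)| : W ∈ Λ }. Then there exists a nontrivial solution ((U_1, …, U_n), (V_1, …, V_n)) ∈ Γ^n × Γ^n to the isometry equation; and moreover, for any p, q ∈ ℕ and any nontrivial solution ((A_1, …, A_p), (B_1, …, B_q)) ∈ Γ^p × Γ^q, one has p = q ≥ n. -/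
open Classical in
lemma aux_finsum {X : Type*} {M : Type*} [AddCommMonoid M] (Γ : Finset (Set X)) (P : Set X → Prop)
    (f : Set X → M) :
    (∑ᶠ U ∈ {U : Set X | U ∈ Γ ∧ P U}, f U) = ∑ U ∈ Γ, if P U then f U else 0 := by
  have h : {U : Set X | U ∈ Γ ∧ P U} = ((Γ.filter P : Finset (Set X)) : Set (Set X)) := by
    ext U; simp
  rw [h, finsum_mem_coe_finset, Finset.sum_filter]

lemma aux_sInter {X : Type*} (Γ : Finset (Set X)) (hX : Set.univ ∈ Γ)
    (hinter : ∀ A ∈ Γ, ∀ B ∈ Γ, A ∩ B ∈ Γ) (P : Set X → Prop) :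
    ⋂₀ {D : Set X | D ∈ Γ ∧ P D} ∈ Γ := by
  classical
  have key : ∀ s : Finset (Set X), s ⊆ Γ → ⋂₀ (s : Set (Set X)) ∈ Γ := by
    intro s
    induction s using Finset.induction_on with
    | empty => intro _; simpa using hX
    | insert a s ha ih =>
      intro hs
      rw [Finset.coe_insert, Set.sInter_insert]
      exact hinter _ (hs (Finset.mem_insert_self _ _)) _
        (ih (fun x hx => hs (Finset.mem_insert_of_mem hx)))
  have h : {U : Set X | U ∈ Γ ∧ P U} = ((Γ.filter P : Finset (Set X)) : Set (Set X)) := by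
    ext U; simp
  rw [h]
  exact key _ (Finset.filter_subset _ _)

open Classical in
lemma aux_inj {X : Type*} (Γ : Finset (Set X)) (f : Set X → ℤ)
    (h : ∀ C ∈ Γ, (∑ U ∈ Γ, if C ⊆ U then f U else 0) = 0) : ∀ U ∈ Γ, f U = 0 := by
  by_contra hne
  push Not at hne
  obtain ⟨U0, hU0, hf0⟩ := hne
  obtain ⟨M, hM⟩ := (Γ.filter (fun U => f U ≠ 0)).exists_maximal ⟨U0, by simp [hU0, hf0]⟩
  have hMΓ : M ∈ Γ ∧ f M ≠ 0 := by simpa using hM.prop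
  apply hMΓ.2
  rw [← h M hMΓ.1, Finset.sum_eq_single M]
  · simp
  · intro b hb hbM
    split_ifs with hs
    · by_contra hfb
      exact hbM (Set.Subset.antisymm (hM.le_of_ge (by simp [hb, hfb]) hs) hs)
    · rfl
  · intro hh; exact absurd hMΓ.1 hh

open Classical in
lemma aux_count {X : Type*} (Γ : Finset (Set X)) {p : ℕ} (A : Fin p → Set X) (hA : ∀ k, A k ∈ Γ)
    (φ : Set X → ℤ) :
    ∑ U ∈ Γ, (Fintype.card {i // A i = U} : ℤ) * φ U = ∑ i, φ (A i) := by
  rw [← Finset.sum_fiberwise_of_maps_to (s := Finset.univ) (t := Γ) (g := A) (fun i _ => hA i)]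
  refine Finset.sum_congr rfl fun U _ => ?_
  rw [Finset.sum_congr rfl (g := fun _ => φ U)]
  · simp [Fintype.card_subtype]
  · intro i hi
    rw [(Finset.mem_filter.1 hi).2]

open Classical in
lemma aux_equiv {X : Type*} {p q : ℕ} (A : Fin p → Set X) (B : Fin q → Set X)
    (h : ∀ U, Fintype.card {i // A i = U} = Fintype.card {i // B i = U}) :
    ∃ σ : Fin p ≃ Fin q, ∀ i, A i = B (σ i) := by
  refine ⟨(Equiv.sigmaFiberEquiv A).symm.trans ((Equiv.sigmaCongrRight
    (fun U => Fintype.equivOfCardEq (h U))).trans (Equiv.sigmaFiberEquiv B)), fun i => ?_⟩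
  exact ((Fintype.equivOfCardEq (h (A i))) ⟨i, rfl⟩).2.symm

lemma aux_tuple {X : Type*} (Γ : Finset (Set X)) (n : ℕ) (m : Set X → ℕ)
    (hm : ∑ U ∈ Γ, m U = n) : ∃ A : Fin n → Set X, (∀ k, A k ∈ Γ) ∧
      ∀ φ : Set X → ℤ, ∑ i, φ (A i) = ∑ U ∈ Γ, (m U : ℤ) * φ U := by
  have hc : Fintype.card (Σ U : Γ, Fin (m U)) = n := by
    rw [Fintype.card_sigma, ← hm, ← Finset.sum_coe_sort Γ]
    simp
  let e : Fin n ≃ (Σ U : Γ, Fin (m U)) := (Fintype.equivFinOfCardEq hc).symm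
  refine ⟨fun i => (e i).1, fun i => (e i).1.2, fun φ => ?_⟩
  rw [e.sum_comp (fun s => φ s.1), Fintype.sum_sigma, ← Finset.sum_coe_sort Γ]
  simp


theorem stmt13 {X : Type*} (Γ : Finset (Set X))
    (hX : Set.univ ∈ Γ)
    (hinter : ∀ A ∈ Γ, ∀ B ∈ Γ, A ∩ B ∈ Γ)
    (hempty : (∅ : Set X) ∉ Γ)
    -- `μ` is the Möbius function of the lattice `(Γ, ⊆)`, characterized by
    -- the three defining properties (a), (b), (c)
    (μ : Set X → Set X → ℤ)
    (hμa : ∀ A ∈ Γ, ∀ B ∈ Γ, ¬A ⊆ B → μ A B = 0)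
    (hμb : ∀ C ∈ Γ, μ C C = 1)
    (hμc : ∀ C ∈ Γ, ∀ D ∈ Γ, C ⊆ D → C ≠ D →
      (∑ᶠ U ∈ {U : Set X | U ∈ Γ ∧ C ⊆ U ∧ U ⊆ D}, μ U D) = 0)
    -- `Λ ≠ ∅`
    (hΛ : ∃ C ∈ Γ, ∀ x : X, C ≠ ⋂₀ {D : Set X | D ∈ Γ ∧ x ∈ D})
    -- `n = min { (1/2) Σ_{U ∈ Γ, U ⊆ W} |μ(U,W)| : W ∈ Λ }`
    (n : ℕ)
    (hn : 2 * n = sInf {k : ℕ | ∃ W ∈ Γ,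
      (∀ x : X, W ≠ ⋂₀ {D : Set X | D ∈ Γ ∧ x ∈ D}) ∧
      k = ∑ᶠ U ∈ {U : Set X | U ∈ Γ ∧ U ⊆ W}, (μ U W).natAbs}) :
    -- there is a nontrivial solution of length `n`
    (∃ U V : Fin n → Set X, (∀ k, U k ∈ Γ) ∧ (∀ k, V k ∈ Γ) ∧
      (∀ x : X,
        (∑ i : Fin n, (U i).indicator (fun _ => (1 : ℤ)) x) =
          ∑ j : Fin n, (V j).indicator (fun _ => (1 : ℤ)) x) ∧
      ¬∃ σ : Fin n ≃ Fin n, ∀ i, U i = V (σ i)) ∧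
    -- any nontrivial solution `((A_1,…,A_p), (B_1,…,B_q))` has `p = q ≥ n`
    (∀ (p q : ℕ) (A : Fin p → Set X) (B : Fin q → Set X),
      (∀ k, A k ∈ Γ) → (∀ k, B k ∈ Γ) →
      (∀ x : X,
        (∑ i : Fin p, (A i).indicator (fun _ => (1 : ℤ)) x) =
          ∑ j : Fin q, (B j).indicator (fun _ => (1 : ℤ)) x) →
      (¬∃ σ : Fin p ≃ Fin q, ∀ i, A i = B (σ i)) →
      p = q ∧ n ≤ p) := by
  classical
  -- setup
  have hcl : ∀ x : X, ∀ U ∈ Γ, (⋂₀ {D : Set X | D ∈ Γ ∧ x ∈ D} ⊆ U ↔ x ∈ U) := by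
    intro x U hU
    constructor
    · intro h
      exact h (Set.mem_sInter.2 fun D hD => hD.2)
    · intro h
      exact Set.sInter_subset_of_mem ⟨hU, h⟩
  have hclΓ : ∀ x : X, ⋂₀ {D : Set X | D ∈ Γ ∧ x ∈ D} ∈ Γ :=
    fun x => aux_sInter Γ hX hinter _
  -- bottom point
  obtain ⟨b, hb⟩ : ∃ b : X, ∀ U ∈ Γ, b ∈ U := by
    have h1 := aux_sInter Γ hX hinter (fun _ => True)
    have h2 : (⋂₀ {D : Set X | D ∈ Γ ∧ True}).Nonempty := by
      rw [Set.nonempty_iff_ne_empty]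
      intro h; rw [h] at h1; exact hempty h1
    obtain ⟨b, hb⟩ := h2
    exact ⟨b, fun U hU => Set.mem_sInter.1 hb U ⟨hU, trivial⟩⟩
  -- Möbius
  have hμ : ∀ W ∈ Γ, ∀ C ∈ Γ, (∑ U ∈ Γ, if C ⊆ U then μ U W else 0) = if C = W then 1 else 0 := by
    intro W hW C hC
    have e : (∑ U ∈ Γ, if C ⊆ U then μ U W else 0)
        = ∑ U ∈ Γ, if (C ⊆ U ∧ U ⊆ W) then μ U W else 0 := by
      refine Finset.sum_congr rfl fun U hU => ?_
      by_cases h1 : U ⊆ W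
      · simp [h1]
      · simp [hμa U hU W hW h1]
    rw [e]
    split_ifs with hCW
    · subst hCW
      rw [Finset.sum_eq_single C]
      · simp [hμb C hC]
      · intro U _ hne
        rw [if_neg]
        rintro ⟨h1, h2⟩
        exact hne (Set.Subset.antisymm h2 h1)
      · intro h; exact absurd hC h
    · by_cases hs : C ⊆ W
      · have h := hμc C hC W hW hs hCW
        rw [aux_finsum Γ (fun U => C ⊆ U ∧ U ⊆ W)] at h
        convert h using 3
      · refine Finset.sum_eq_zero fun U _ => if_neg ?_
        rintro ⟨h1, h2⟩
        exact hs (h1.trans h2)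
  have hN : ∀ W ∈ Γ, (∑ᶠ U ∈ {U : Set X | U ∈ Γ ∧ U ⊆ W}, (μ U W).natAbs)
      = ∑ U ∈ Γ, (μ U W).natAbs := by
    intro W hW
    rw [aux_finsum]
    refine Finset.sum_congr rfl fun U hU => ?_
    split_ifs with h
    · rfl
    · simp [hμa U hU W hW h]
  constructor
  · have hne : {k : ℕ | ∃ W ∈ Γ,
      (∀ x : X, W ≠ ⋂₀ {D : Set X | D ∈ Γ ∧ x ∈ D}) ∧
      k = ∑ᶠ U ∈ {U : Set X | U ∈ Γ ∧ U ⊆ W}, (μ U W).natAbs}.Nonempty := by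
      obtain ⟨C, hC, hC2⟩ := hΛ
      exact ⟨_, C, hC, hC2, rfl⟩
    obtain ⟨W, hW, hWΛ, hk⟩ := Nat.sInf_mem hne
    rw [← hn, hN W hW] at hk
    have hsol : ∀ x : X, (∑ U ∈ Γ, if x ∈ U then μ U W else 0) = 0 := by
      intro x
      have h := hμ W hW _ (hclΓ x)
      rw [if_neg (fun h => hWΛ x h.symm)] at h
      refine Eq.trans ?_ h
      refine Finset.sum_congr rfl fun U hU => ?_
      simp only [hcl x U hU]
    have htot : ∑ U ∈ Γ, μ U W = 0 := by
      rw [← hsol b]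
      refine Finset.sum_congr rfl fun U hU => ?_
      rw [if_pos (hb U hU)]
    have hs1 : ((∑ U ∈ Γ, (μ U W).toNat : ℕ) : ℤ) - ((∑ U ∈ Γ, (-μ U W).toNat : ℕ) : ℤ) = 0 := by
      push_cast
      rw [← Finset.sum_sub_distrib, ← htot]
      refine Finset.sum_congr rfl fun U _ => ?_
      omega
    have hs2 : (∑ U ∈ Γ, (μ U W).toNat) + (∑ U ∈ Γ, (-μ U W).toNat) = 2 * n := by
      rw [hk, ← Finset.sum_add_distrib]
      refine Finset.sum_congr rfl fun U _ => ?_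
      omega
    obtain ⟨A, hA, hA2⟩ := aux_tuple Γ n (fun U => (μ U W).toNat) (by omega)
    obtain ⟨B, hB, hB2⟩ := aux_tuple Γ n (fun U => (-μ U W).toNat) (by omega)
    have hdiff : ∀ φ : Set X → ℤ, ∑ i, φ (A i) - ∑ i, φ (B i) = ∑ U ∈ Γ, μ U W * φ U := by
      intro φ
      rw [hA2, hB2, ← Finset.sum_sub_distrib]
      refine Finset.sum_congr rfl fun U _ => ?_
      rw [← sub_mul]
      congr 1
      omega
    refine ⟨A, B, hA, hB, fun x => ?_, ?_⟩
    · have h := hdiff (fun U => U.indicator (fun _ => (1 : ℤ)) x)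
      have h2 : (∑ U ∈ Γ, μ U W * U.indicator (fun _ => (1 : ℤ)) x) = 0 := by
        rw [← hsol x]
        refine Finset.sum_congr rfl fun U _ => ?_
        simp [Set.indicator_apply]
      rw [h2] at h
      exact sub_eq_zero.1 h
    · rintro ⟨σ, hσ⟩
      have h := hdiff (fun U => if U = W then 1 else 0)
      rw [Finset.sum_congr rfl (fun i _ => by rw [hσ i]),
        σ.sum_comp (fun i => if B i = W then (1 : ℤ) else 0), sub_self] at h
      simp [hW, hμb W hW] at h
  · intro p q A B hA hB hAB hnt
    set f : Set X → ℤ := fun U =>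
      (Fintype.card {i // A i = U} : ℤ) - (Fintype.card {i // B i = U} : ℤ) with hf
    have hfφ : ∀ φ : Set X → ℤ, ∑ U ∈ Γ, f U * φ U = ∑ i, φ (A i) - ∑ i, φ (B i) := by
      intro φ
      rw [← aux_count Γ A hA, ← aux_count Γ B hB, ← Finset.sum_sub_distrib]
      exact Finset.sum_congr rfl fun U _ => sub_mul _ _ _
    have hfx : ∀ x, (∑ U ∈ Γ, if x ∈ U then f U else 0) = 0 := by
      intro x
      have h := hfφ (fun U => U.indicator (fun _ => (1 : ℤ)) x)
      rw [hAB x, sub_self] at h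
      refine Eq.trans ?_ h
      refine Finset.sum_congr rfl fun U _ => ?_
      simp [Set.indicator_apply]
    have hpq : p = q := by
      have h := hfφ (fun U => U.indicator (fun _ => (1 : ℤ)) b)
      have h := hAB b
      simp only [Set.indicator_apply, hb _ (hA _), hb _ (hB _), if_true] at h
      simpa using h
    refine ⟨hpq, ?_⟩
    have hl1 : ∑ U ∈ Γ, |f U| ≤ 2 * p := by
      have h1 := aux_count Γ A hA (fun _ => 1)
      have h2 := aux_count Γ B hB (fun _ => 1)
      simp only [mul_one, Finset.sum_const, Finset.card_univ, Fintype.card_fin, nsmul_eq_mul] at h1 h2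
      calc ∑ U ∈ Γ, |f U| ≤ ∑ U ∈ Γ, ((Fintype.card {i // A i = U} : ℤ)
            + (Fintype.card {i // B i = U} : ℤ)) := by
            refine Finset.sum_le_sum fun U _ => ?_
            simp only [hf]
            rw [abs_le]
            constructor <;> omega
        _ = 2 * p := by rw [Finset.sum_add_distrib, h1, h2, hpq]; ring
    -- nonvanishing of g
    have hg : ∃ C ∈ Γ, (∑ U ∈ Γ, if C ⊆ U then f U else 0) ≠ 0 := by
      by_contra hcon
      push Not at hcon
      have h0 := aux_inj Γ f hcon
      apply hnt
      apply aux_equiv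
      intro U
      by_cases hU : U ∈ Γ
      · have := h0 U hU
        simp only [hf] at this
        omega
      · have e1 : IsEmpty {i // A i = U} := ⟨fun i => hU (i.2 ▸ hA i.1)⟩
        have e2 : IsEmpty {i // B i = U} := ⟨fun i => hU (i.2 ▸ hB i.1)⟩
        rw [Fintype.card_eq_zero, Fintype.card_eq_zero]
    obtain ⟨C0, hC0, hgC0⟩ := hg
    obtain ⟨W, hWm⟩ := (Γ.filter (fun C => (∑ U ∈ Γ, if C ⊆ U then f U else 0) ≠ 0)).exists_minimal
      ⟨C0, Finset.mem_filter.2 ⟨hC0, hgC0⟩⟩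
    obtain ⟨hW, hgW⟩ := Finset.mem_filter.1 hWm.prop
    set c := ∑ U ∈ Γ, if W ⊆ U then f U else 0 with hc
    have hWΛ : ∀ x : X, W ≠ ⋂₀ {D : Set X | D ∈ Γ ∧ x ∈ D} := by
      intro x hx
      apply hgW
      refine Eq.trans ?_ (hfx x)
      refine Finset.sum_congr rfl fun U hU => ?_
      rw [hx]
      simp only [hcl x U hU]
    have hle : 2 * n ≤ ∑ U ∈ Γ, (μ U W).natAbs := by
      rw [hn]
      exact Nat.sInf_le ⟨W, hW, hWΛ, (hN W hW).symm⟩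
    -- pushforward
    let f' : Set X → ℤ := fun V => ∑ U ∈ Γ, if U ∩ W = V then f U else 0
    have hf'up : ∀ C ∈ Γ, (∑ V ∈ Γ, if C ⊆ V then f' V else 0) = if C = W then c else 0 := by
      intro C hC
      have e1 : (∑ V ∈ Γ, if C ⊆ V then f' V else 0) = ∑ U ∈ Γ, if C ⊆ U ∩ W then f U else 0 := by
        have : ∀ V ∈ Γ, (if C ⊆ V then f' V else 0)
            = ∑ U ∈ Γ, if U ∩ W = V then (if C ⊆ V then f U else 0) else 0 := by
          intro V _
          split_ifs with h
          · rfl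
          · simp
        rw [Finset.sum_congr rfl this, Finset.sum_comm]
        refine Finset.sum_congr rfl fun U hU => ?_
        rw [Finset.sum_ite_eq, if_pos (hinter U hU W hW)]
      rw [e1]
      by_cases hCW : C ⊆ W
      · simp only [Set.subset_inter_iff, hCW, and_true]
        split_ifs with h
        · rw [hc, h]
        · by_contra hne
          exact h (Set.Subset.antisymm hCW
            (hWm.le_of_le (Finset.mem_filter.2 ⟨hC, hne⟩) hCW))
      · rw [if_neg (fun h => hCW h.subset)]
        refine Finset.sum_eq_zero fun U _ => if_neg ?_
        intro h
        exact hCW (h.trans Set.inter_subset_right)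
    have hf'eq : ∀ V ∈ Γ, f' V = c * μ V W := by
      intro V hV
      have := aux_inj Γ (fun V => f' V - c * μ V W) (by
        intro C hC
        have h1 := hf'up C hC
        have h2 := hμ W hW C hC
        have h3 : (∑ U ∈ Γ, if C ⊆ U then f' U - c * μ U W else 0)
            = (∑ U ∈ Γ, if C ⊆ U then f' U else 0)
              - c * (∑ U ∈ Γ, if C ⊆ U then μ U W else 0) := by
          rw [Finset.mul_sum, ← Finset.sum_sub_distrib]
          refine Finset.sum_congr rfl fun U _ => ?_
          split_ifs <;> simp
        rw [h3, h1, h2]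
        split_ifs <;> simp) V hV
      exact sub_eq_zero.1 this
    have hf'l1 : ∑ V ∈ Γ, |f' V| ≤ ∑ U ∈ Γ, |f U| := by
      calc ∑ V ∈ Γ, |f' V| ≤ ∑ V ∈ Γ, ∑ U ∈ Γ, (if U ∩ W = V then |f U| else 0) := by
            refine Finset.sum_le_sum fun V _ => ?_
            refine (Finset.abs_sum_le_sum_abs _ _).trans (Finset.sum_le_sum fun U _ => ?_)
            split_ifs <;> simp
        _ = ∑ U ∈ Γ, |f U| := by
            rw [Finset.sum_comm]
            refine Finset.sum_congr rfl fun U hU => ?_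
            rw [Finset.sum_ite_eq, if_pos (hinter U hU W hW)]
    have hμl1 : ((∑ U ∈ Γ, (μ U W).natAbs : ℕ) : ℤ) ≤ ∑ V ∈ Γ, |f' V| := by
      push_cast
      refine Finset.sum_le_sum fun V hV => ?_
      rw [hf'eq V hV, abs_mul]
      exact le_mul_of_one_le_left (abs_nonneg _) (Int.one_le_abs hgW)
    have : ((2 * n : ℕ) : ℤ) ≤ 2 * p := le_trans (by exact_mod_cast hle) (hμl1.trans (hf'l1.trans hl1))
    push_cast at this
    omega
end

section
/- Let G be a group and let A, B, C, D be subgroups of G. The following three statements are equivalent: (1) either (A = C and B = D) or (A = D and B = C); (2) 1_{(G,A)} + 1_{(G,B)} = 1_{(G,C)} + 1_{(G,D)} as functions on G; (3) A ∪ B = C ∪ D and A ∩ B = C ∩ D. -/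
theorem sub_union_aux {G : Type*} [Group G] (H K L : Subgroup G)
    (h : ∀ g ∈ H, g ∈ K ∨ g ∈ L) : (∀ g ∈ H, g ∈ K) ∨ (∀ g ∈ H, g ∈ L) := by
  by_contra hc
  push Not at hc
  obtain ⟨⟨a, ha, haK⟩, b, hb, hbL⟩ := hc
  have haL := (h a ha).resolve_left haK
  have hbK := (h b hb).resolve_right hbL
  rcases h (a * b) (H.mul_mem ha hb) with h1 | h1
  · exact haK ((K.mul_mem_cancel_right hbK).1 h1)
  · exact hbL ((L.mul_mem_cancel_left haL).1 h1)

set_option maxHeartbeats 2000000 in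
theorem key_aux {G : Type*} [Group G] (A B C D : Subgroup G)
    (hu : ∀ g, (g ∈ A ∨ g ∈ B) ↔ (g ∈ C ∨ g ∈ D))
    (hi : ∀ g, (g ∈ A ∧ g ∈ B) ↔ (g ∈ C ∧ g ∈ D)) :
    (A = C ∧ B = D) ∨ (A = D ∧ B = C) := by
  have hA := sub_union_aux A C D (fun g hg => (hu g).1 (Or.inl hg))
  have hB := sub_union_aux B C D (fun g hg => (hu g).1 (Or.inr hg))
  have hC := sub_union_aux C A B (fun g hg => (hu g).2 (Or.inl hg))
  have hD := sub_union_aux D A B (fun g hg => (hu g).2 (Or.inr hg))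
  simp only [SetLike.ext_iff]
  rcases hA with hA | hA <;> rcases hB with hB | hB <;> rcases hC with hC | hC <;>
    rcases hD with hD | hD <;>
    first
    | (left; constructor <;> intro g <;> have := hu g <;> have := hi g <;> have := hA g <;>
        have := hB g <;> have := hC g <;> have := hD g <;> grind only)
    | (right; constructor <;> intro g <;> have := hu g <;> have := hi g <;> have := hA g <;>
        have := hB g <;> have := hC g <;> have := hD g <;> grind only)

theorem stmt14 {G : Type*} [Group G] (A B C D : Subgroup G) :
    -- (1) ↔ (2)
    ((((A = C ∧ B = D) ∨ (A = D ∧ B = C)) ↔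
      ∀ g : G,
        (A : Set G).indicator (fun _ => (1 : ℤ)) g +
            (B : Set G).indicator (fun _ => (1 : ℤ)) g =
          (C : Set G).indicator (fun _ => (1 : ℤ)) g +
            (D : Set G).indicator (fun _ => (1 : ℤ)) g)) ∧
    -- (2) ↔ (3)
    ((∀ g : G,
        (A : Set G).indicator (fun _ => (1 : ℤ)) g +
            (B : Set G).indicator (fun _ => (1 : ℤ)) g =
          (C : Set G).indicator (fun _ => (1 : ℤ)) g +
            (D : Set G).indicator (fun _ => (1 : ℤ)) g) ↔
      ((A : Set G) ∪ (B : Set G) = (C : Set G) ∪ (D : Set G) ∧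
        (A : Set G) ∩ (B : Set G) = (C : Set G) ∩ (D : Set G))) := by
  have h23 : (∀ g : G,
        (A : Set G).indicator (fun _ => (1 : ℤ)) g +
            (B : Set G).indicator (fun _ => (1 : ℤ)) g =
          (C : Set G).indicator (fun _ => (1 : ℤ)) g +
            (D : Set G).indicator (fun _ => (1 : ℤ)) g) ↔
      ((A : Set G) ∪ (B : Set G) = (C : Set G) ∪ (D : Set G) ∧
        (A : Set G) ∩ (B : Set G) = (C : Set G) ∩ (D : Set G)) := by
    classical
    rw [Set.ext_iff, Set.ext_iff, ← forall_and]
    refine forall_congr' fun g => ?_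
    simp only [Set.indicator_apply, Set.mem_union, Set.mem_inter_iff, SetLike.mem_coe]
    by_cases h1 : g ∈ A <;> by_cases h2 : g ∈ B <;> by_cases h3 : g ∈ C <;>
      by_cases h4 : g ∈ D <;> simp [h1, h2, h3, h4]
  refine ⟨⟨?_, fun h => ?_⟩, h23⟩
  · rintro (⟨rfl, rfl⟩ | ⟨rfl, rfl⟩) g
    · rfl
    · exact add_comm _ _
  · obtain ⟨hu, hi⟩ := h23.1 h
    exact key_aux A B C D (fun g => Set.ext_iff.1 hu g) (fun g => Set.ext_iff.1 hi g)
end
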